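/- Let b > 0 be real, let x ∈ ℝ, and let a ∈ ℂ satisfy −(b+b⁻¹)/4 < Im a < 0. Then the integral ∫_ℝ e^{−2πixy}·D_{−a−c_b}(y) dy converges absolutely and D_a(x) = w_b(2a + c_b) · ∫_ℝ e^{−2πixy}·D_{−a−c_b}(y) dy. (All arguments of e_b occurring here lie in the strip |Im z| < (b+b⁻¹)/2.) -/

import Mathlib

open MeasureTheory Complex Real Filter Topology

noncomputable section

/-- The special point `c_b = i(b+b⁻¹)/2`. -/
def cb (b : ℝ) : ℂ := Complex.I * ((b : ℂ) + (b : ℂ)⁻¹) / 2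

/-- The integrand in the integral representation of the noncompact quantum dilogarithm. -/
def ebIntegrand (b ε : ℝ) (z : ℂ) (t : ℝ) : ℂ :=
  Complex.exp (-2 * Complex.I * z * ((t : ℂ) + Complex.I * (ε : ℂ))) /
    (((t : ℂ) + Complex.I * (ε : ℂ)) *
      Complex.sinh ((b : ℂ) * ((t : ℂ) + Complex.I * (ε : ℂ))) *
      Complex.sinh ((b : ℂ)⁻¹ * ((t : ℂ) + Complex.I * (ε : ℂ))))

/-- The noncompact quantum dilogarithm defined with contour parameter `ε`. -/
def ebE (b ε : ℝ) (z : ℂ) : ℂ :=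
  Complex.exp ((1 / 4 : ℂ) * ∫ t : ℝ, ebIntegrand b ε z t)

/-- The noncompact quantum dilogarithm `e_b` (canonical choice of contour parameter;
the value is independent of this choice). -/
def eb (b : ℝ) (z : ℂ) : ℂ := ebE b (π * min b b⁻¹ / 2) z

/-- The function `w_b(x) = e^{−(πi/12)(1+2c_b²)}·e^{πix²/2}/e_b(x)`. -/
def wb (b : ℝ) (z : ℂ) : ℂ :=
  Complex.exp (-((π : ℂ) * Complex.I / 12) * (1 + 2 * (cb b) ^ 2)) *
    Complex.exp ((π : ℂ) * Complex.I * z ^ 2 / 2) / eb b z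

/-- The function `D_α(x) = w_b(x+α)/w_b(x−α)`. -/
def Dfun (b : ℝ) (α x : ℂ) : ℂ := wb b (x + α) / wb b (x - α)

lemma integrable_exp_neg_abs' {s : ℝ} (hs : 0 < s) : Integrable (fun t : ℝ => Real.exp (-s * |t|)) := by
  have h1 : IntegrableOn (fun t : ℝ => Real.exp (-s * |t|)) (Set.Ioi 0) := by
    refine (exp_neg_integrableOn_Ioi 0 hs).congr_fun ?_ measurableSet_Ioi
    intro t ht
    simp only [Set.mem_Ioi] at ht
    simp [abs_of_pos ht]
  have h2 : IntegrableOn (fun t : ℝ => Real.exp (-s * |t|)) (Set.Iic 0) := by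
    rw [← integrableOn_Ici_iff_integrableOn_Ioi] at h1
    have := h1.comp_neg
    simpa using this
  have := h2.union h1
  rwa [Set.Iic_union_Ioi, integrableOn_univ] at this

/-- extend an exponential bound across a compact interval. -/
lemma expDecay_of_large {k : ℝ → ℂ} (hk : Continuous k) {C s : ℝ}
    (h : ∀ t : ℝ, 1 ≤ |t| → ‖k t‖ ≤ C * Real.exp (-s * |t|)) :
    ∃ C' : ℝ, 0 < C' ∧ ∀ t : ℝ, ‖k t‖ ≤ C' * Real.exp (-s * |t|) := by
  have hc : Continuous (fun t : ℝ => ‖k t‖ * Real.exp (s * |t|)) := by fun_prop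
  obtain ⟨M, hM⟩ := (isCompact_Icc (a := (-1:ℝ)) (b := 1)).bddAbove_image hc.continuousOn
  refine ⟨max (max M C) 1, by positivity, fun t => ?_⟩
  have he : Real.exp (s * |t|) * Real.exp (-s * |t|) = 1 := by
    rw [← Real.exp_add]; simp
  have hp := Real.exp_pos (-s * |t|)
  by_cases ht : 1 ≤ |t|
  · refine (h t ht).trans ?_
    gcongr
    exact (le_max_right _ _).trans (le_max_left _ _)
  · have : ‖k t‖ * Real.exp (s * |t|) ≤ M := by
      apply hM
      refine ⟨t, ?_, rfl⟩
      rw [Set.mem_Icc]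
      exact abs_le.mp (le_of_not_ge ht)
    calc ‖k t‖ = (‖k t‖ * Real.exp (s * |t|)) * Real.exp (-s * |t|) := by
          rw [mul_assoc, he, mul_one]
      _ ≤ _ := by
          gcongr
          exact this.trans ((le_max_left _ _).trans (le_max_left _ _))

lemma norm_ker (ε : ℝ) (z : ℂ) (t : ℝ) :
    ‖Complex.exp (-2 * Complex.I * z * ((t : ℂ) + Complex.I * (ε : ℂ)))‖ =
      Real.exp (2 * t * z.im + 2 * ε * z.re) := by
  rw [Complex.norm_exp]
  congr 1
  simp
  ring

lemma norm_ker_le (ε : ℝ) (z : ℂ) (t : ℝ) {s' : ℝ} (h : |z.im| ≤ s') :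
    ‖Complex.exp (-2 * Complex.I * z * ((t : ℂ) + Complex.I * (ε : ℂ)))‖ ≤
      Real.exp (2 * ε * z.re) * Real.exp (2 * s' * |t|) := by
  rw [norm_ker, ← Real.exp_add]
  apply Real.exp_le_exp.mpr
  have : t * z.im ≤ |t| * s' := by
    calc t * z.im ≤ |t * z.im| := le_abs_self _
      _ = |t| * |z.im| := abs_mul _ _
      _ ≤ _ := by gcongr
  nlinarith

lemma lap_integrand_bound {ε s s' C : ℝ} {k : ℝ → ℂ} (h : ∀ t : ℝ, ‖k t‖ ≤ C * Real.exp (-s * |t|))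
    {z : ℂ} (hz : |z.im| ≤ s') (t : ℝ) :
    ‖Complex.exp (-2 * Complex.I * z * ((t : ℂ) + Complex.I * (ε : ℂ))) * k t‖ ≤
      Real.exp (2 * ε * z.re) * (C * Real.exp (-(s - 2 * s') * |t|)) := by
  rw [norm_mul]
  calc _ ≤ (Real.exp (2 * ε * z.re) * Real.exp (2 * s' * |t|)) * (C * Real.exp (-s * |t|)) :=
        mul_le_mul (norm_ker_le ε z t hz) (h t) (norm_nonneg _) (by positivity)
    _ = Real.exp (2 * ε * z.re) * (C * (Real.exp (2 * s' * |t|) * Real.exp (-s * |t|))) := by ring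
    _ = _ := by
        rw [← Real.exp_add]; ring_nf

lemma lap_integrable {ε s C : ℝ} {k : ℝ → ℂ} (hk : Continuous k)
    (h : ∀ t : ℝ, ‖k t‖ ≤ C * Real.exp (-s * |t|)) {z : ℂ} (hz : 2 * |z.im| < s) :
    Integrable (fun t : ℝ =>
      Complex.exp (-2 * Complex.I * z * ((t : ℂ) + Complex.I * (ε : ℂ))) * k t) := by
  have hi := ((integrable_exp_neg_abs' (s := s - 2 * |z.im|) (by linarith)).const_mul C).const_mul
    (Real.exp (2 * ε * z.re))
  refine hi.mono' (by fun_prop) (ae_of_all _ fun t => lap_integrand_bound h le_rfl t)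

lemma lap_bound {s s' C : ℝ} (ε : ℝ) {k : ℝ → ℂ}
    (h : ∀ t : ℝ, ‖k t‖ ≤ C * Real.exp (-s * |t|)) (hs : 2 * s' < s) :
    ∃ C' : ℝ, ∀ z : ℂ, |z.im| ≤ s' →
    ‖∫ t : ℝ, Complex.exp (-2 * Complex.I * z * ((t : ℂ) + Complex.I * (ε : ℂ))) * k t‖ ≤
      C' * Real.exp (2 * ε * z.re) := by
  refine ⟨∫ t : ℝ, C * Real.exp (-(s - 2 * s') * |t|), fun z hz => ?_⟩
  have hi := ((integrable_exp_neg_abs' (s := s - 2 * s') (by linarith)).const_mul C).const_mul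
    (Real.exp (2 * ε * z.re))
  have := norm_integral_le_of_norm_le hi (ae_of_all _ fun t => lap_integrand_bound h hz t)
  rw [integral_const_mul] at this
  linarith [this]

lemma abs_le_exp_mul {δ : ℝ} (hδ : 0 < δ) (t : ℝ) : |t| ≤ δ⁻¹ * Real.exp (δ * |t|) := by
  have := Real.add_one_le_exp (δ * |t|)
  rw [inv_mul_eq_div, le_div_iff₀ hδ]
  linarith

lemma lap_hasDerivAt {ε s C : ℝ} {k : ℝ → ℂ} (hk : Continuous k)
    (h : ∀ t : ℝ, ‖k t‖ ≤ C * Real.exp (-s * |t|)) {z : ℂ} (hz : 2 * |z.im| < s) :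
    HasDerivAt (fun z : ℂ => ∫ t : ℝ,
        Complex.exp (-2 * Complex.I * z * ((t : ℂ) + Complex.I * (ε : ℂ))) * k t)
      (∫ t : ℝ, (-2 * Complex.I * ((t : ℂ) + Complex.I * (ε : ℂ))) *
        (Complex.exp (-2 * Complex.I * z * ((t : ℂ) + Complex.I * (ε : ℂ))) * k t)) z := by
  obtain ⟨s', h1, h2⟩ : ∃ s', |z.im| < s' ∧ 2 * s' < s := ⟨(|z.im| + s / 2) / 2, by linarith, by linarith⟩
  have hC : 0 ≤ C := by
    have := (norm_nonneg _).trans (h 0)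
    simpa using this
  set δ := (s - 2 * s') / 2 with hδ
  have hδ0 : 0 < δ := by rw [hδ]; linarith
  set M := Real.exp (2 * |ε| * (|z.re| + 1)) with hM
  let U : Set ℂ := {x : ℂ | |x.im| < s'} ∩ {x : ℂ | |x.re| < |z.re| + 1}
  have hU : U ∈ 𝓝 z := by
    apply IsOpen.mem_nhds
    · apply IsOpen.inter
      · exact isOpen_lt (by fun_prop) continuous_const
      · exact isOpen_lt (by fun_prop) continuous_const
    · exact ⟨h1, by show |z.re| < |z.re| + 1; linarith⟩
  let bound : ℝ → ℝ := fun t => (2 * (δ⁻¹ + |ε|)) * (M * (C * Real.exp (-δ * |t|)))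
  have hb : Integrable bound :=
    (((integrable_exp_neg_abs' hδ0).const_mul C).const_mul M).const_mul _
  refine (hasDerivAt_integral_of_dominated_loc_of_deriv_le (bound := bound)
    (F := fun (z : ℂ) (t : ℝ) =>
      Complex.exp (-2 * Complex.I * z * ((t : ℂ) + Complex.I * (ε : ℂ))) * k t)
    (F' := fun (z : ℂ) (t : ℝ) => (-2 * Complex.I * ((t : ℂ) + Complex.I * (ε : ℂ))) *
        (Complex.exp (-2 * Complex.I * z * ((t : ℂ) + Complex.I * (ε : ℂ))) * k t)) hU
    (Eventually.of_forall fun x => by fun_prop) (lap_integrable hk h hz) (by fun_prop)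
    (ae_of_all _ fun t x hx => ?_) hb (ae_of_all _ fun t x hx => ?_)).2
  · have hx1 : |x.im| ≤ s' := le_of_lt hx.1
    have hx2 : |x.re| ≤ |z.re| + 1 := le_of_lt hx.2
    rw [norm_mul]
    have e1 := lap_integrand_bound (ε := ε) h hx1 t
    have e2 : Real.exp (2 * ε * x.re) ≤ M := by
      apply Real.exp_le_exp.mpr
      calc 2 * ε * x.re ≤ |2 * ε * x.re| := le_abs_self _
        _ = 2 * |ε| * |x.re| := by rw [abs_mul, abs_mul]; simp
        _ ≤ _ := by gcongr
    have e3 : ‖(-2 * Complex.I * ((t : ℂ) + Complex.I * (ε : ℂ)))‖ ≤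
        2 * (δ⁻¹ + |ε|) * Real.exp (δ * |t|) := by
      have : ‖((t : ℂ) + Complex.I * (ε : ℂ))‖ ≤ |t| + |ε| := by
        refine (norm_add_le _ _).trans ?_
        simp
      have a1 := abs_le_exp_mul hδ0 t
      have a2 : |ε| ≤ |ε| * Real.exp (δ * |t|) := by
        refine le_mul_of_one_le_right (abs_nonneg _) (Real.one_le_exp (by positivity))
      rw [norm_mul, norm_mul]
      simp only [norm_neg, Complex.norm_ofNat, Complex.norm_I, mul_one]
      nlinarith
    calc _ ≤ (2 * (δ⁻¹ + |ε|) * Real.exp (δ * |t|)) * (M * (C * Real.exp (-(s - 2 * s') * |t|))) := by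
          refine mul_le_mul e3 (e1.trans ?_) (norm_nonneg _) (by positivity)
          gcongr
      _ = (2 * (δ⁻¹ + |ε|)) * (M * (C * (Real.exp (δ * |t|) * Real.exp (-(s - 2 * s') * |t|)))) := by
          ring
      _ = bound t := by
          rw [← Real.exp_add]
          have : δ * |t| + -(s - 2 * s') * |t| = -δ * |t| := by rw [hδ]; ring
          rw [this]
  · have hd : HasDerivAt (fun x : ℂ => -2 * Complex.I * x * ((t : ℂ) + Complex.I * (ε : ℂ)))
        (-2 * Complex.I * ((t : ℂ) + Complex.I * (ε : ℂ))) x := by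
      have := ((hasDerivAt_id x).const_mul (-2 * Complex.I)).mul_const ((t : ℂ) + Complex.I * (ε : ℂ))
      simpa using this
    have := (hd.cexp).mul_const (k t)
    refine this.congr_deriv ?_
    ring

/-- contour shift -/
lemma shift_contour {f : ℂ → ℂ} {c d C : ℝ} (hcd : c ≤ d)
    (hf : ∀ z : ℂ, c ≤ z.im → z.im ≤ d → DifferentiableAt ℂ f z)
    (hb : ∀ t u : ℝ, 1 ≤ |t| → c ≤ u → u ≤ d → ‖f ((t : ℂ) + Complex.I * (u : ℂ))‖ ≤ C / t ^ 2) :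
    ∫ t : ℝ, f ((t : ℂ) + Complex.I * (c : ℂ)) = ∫ t : ℝ, f ((t : ℂ) + Complex.I * (d : ℂ)) := by
  have hcont : ∀ u : ℝ, c ≤ u → u ≤ d → Continuous (fun t : ℝ => f ((t : ℂ) + Complex.I * (u : ℂ))) := by
    intro u h1 h2
    rw [continuous_iff_continuousAt]
    intro t
    have : ContinuousAt f ((t : ℂ) + Complex.I * (u : ℂ)) :=
      (hf _ (by simpa using h1) (by simpa using h2)).continuousAt
    exact ContinuousAt.comp (f := fun t : ℝ => ((t : ℂ) + Complex.I * (u : ℂ))) this (by fun_prop)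
  have hIntg : ∀ u : ℝ, c ≤ u → u ≤ d → Integrable (fun t : ℝ => f ((t : ℂ) + Complex.I * (u : ℂ))) := by
    intro u h1 h2
    obtain ⟨M, hM⟩ := (isCompact_Icc (a := (-1:ℝ)) (b := 1)).bddAbove_image
      (hcont u h1 h2).norm.continuousOn
    have hi := (integrable_inv_one_add_sq).const_mul (2 * max M C)
    refine hi.mono' (hcont u h1 h2).aestronglyMeasurable (ae_of_all _ fun t => ?_)
    by_cases ht : 1 ≤ |t|
    · refine (hb t u ht h1 h2).trans ?_
      have ht2 : 1 ≤ t ^ 2 := by rw [← sq_abs]; nlinarith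
      have hC : 0 ≤ C := by
        have := (norm_nonneg _).trans (hb t u ht h1 h2)
        by_contra hh
        have : C / t ^ 2 < 0 := div_neg_of_neg_of_pos (by linarith) (by linarith)
        linarith
      rw [← div_eq_mul_inv, div_le_div_iff₀ (by linarith) (by linarith)]
      have : C ≤ max M C := le_max_right _ _
      nlinarith
    · have hle := abs_le.mp (le_of_not_ge ht)
      have h3 : ‖f ((t : ℂ) + Complex.I * (u : ℂ))‖ ≤ M := hM ⟨t, hle, rfl⟩
      have ht2 : t ^ 2 ≤ 1 := by rw [← sq_abs]; nlinarith [abs_nonneg t]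
      refine h3.trans ?_
      have hM0 : 0 ≤ M := (norm_nonneg _).trans h3
      rw [← div_eq_mul_inv, le_div_iff₀ (by positivity)]
      have : M ≤ max M C := le_max_left _ _
      nlinarith
  have T1 := intervalIntegral_tendsto_integral (hIntg c le_rfl hcd) tendsto_neg_atTop_atBot tendsto_id
  have T2 := intervalIntegral_tendsto_integral (hIntg d hcd le_rfl) tendsto_neg_atTop_atBot tendsto_id
  have hrect : ∀ R : ℝ, (∫ t in (-R)..R, f ((t : ℂ) + Complex.I * (c : ℂ))) -
      (∫ t in (-R)..R, f ((t : ℂ) + Complex.I * (d : ℂ))) =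
      - (Complex.I • ∫ u in c..d, f ((R : ℂ) + Complex.I * (u : ℂ))) +
      (Complex.I • ∫ u in c..d, f (((-R : ℝ) : ℂ) + Complex.I * (u : ℂ))) := by
    intro R
    have := Complex.integral_boundary_rect_eq_zero_of_differentiableOn f
      (⟨-R, c⟩ : ℂ) (⟨R, d⟩ : ℂ) (by
        intro z hz
        rw [Complex.mem_reProdIm, Set.uIcc_of_le hcd] at hz
        exact (hf z hz.2.1 hz.2.2).differentiableWithinAt)
    simp only [mul_comm _ Complex.I] at this
    linear_combination this
  have hside : ∀ R : ℝ, 1 ≤ |R| → ‖∫ u in c..d, f ((R : ℂ) + Complex.I * (u : ℂ))‖ ≤ (C * (d - c)) * (R ^ 2)⁻¹ := by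
    intro R hR
    have := intervalIntegral.norm_integral_le_of_norm_le_const (a := c) (b := d) (C := C / R ^ 2)
      (f := fun u : ℝ => f ((R : ℂ) + Complex.I * (u : ℂ))) (by
        intro u hu
        rw [Set.uIoc_of_le hcd] at hu
        exact hb R u hR hu.1.le hu.2)
    rw [abs_of_nonneg (by linarith)] at this
    refine this.trans (le_of_eq (by ring))
  have hlim : Tendsto (fun R : ℝ => (C * (d - c)) * (R ^ 2)⁻¹) atTop (𝓝 0) := by
    have : Tendsto (fun R : ℝ => (R ^ 2)⁻¹) atTop (𝓝 0) :=
      tendsto_inv_atTop_zero.comp (tendsto_pow_atTop two_ne_zero)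
    simpa using this.const_mul (C * (d - c))
  have hS1 : Tendsto (fun R : ℝ => ∫ u in c..d, f ((R : ℂ) + Complex.I * (u : ℂ))) atTop (𝓝 0) := by
    refine squeeze_zero_norm' ?_ hlim
    filter_upwards [eventually_ge_atTop 1] with R hR
    exact hside R (hR.trans (le_abs_self R))
  have hS2 : Tendsto (fun R : ℝ => ∫ u in c..d, f (((-R : ℝ) : ℂ) + Complex.I * (u : ℂ))) atTop (𝓝 0) := by
    refine squeeze_zero_norm' ?_ hlim
    filter_upwards [eventually_ge_atTop 1] with R hR
    have := hside (-R) (by rw [abs_neg]; exact hR.trans (le_abs_self R))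
    rwa [neg_sq] at this
  have T3 := T1.sub T2
  have T4 := ((hS1.const_smul Complex.I).neg).add (hS2.const_smul Complex.I)
  simp only [smul_zero, neg_zero, add_zero] at T4
  have := tendsto_nhds_unique T3 (T4.congr fun R => (hrect R).symm)
  exact sub_eq_zero.mp this

/-- contour shift across a removable singularity at `0`. -/
lemma shift_contour_removable {f : ℂ → ℂ} {c d C : ℝ} (hc : c < 0) (hd : 0 < d)
    (hf : ∀ z : ℂ, c ≤ z.im → z.im ≤ d → z ≠ 0 → DifferentiableAt ℂ f z)
    (h0 : Tendsto (fun w : ℂ => w * f w) (𝓝[≠] 0) (𝓝 0))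
    (hb : ∀ t u : ℝ, 1 ≤ |t| → c ≤ u → u ≤ d → ‖f ((t : ℂ) + Complex.I * (u : ℂ))‖ ≤ C / t ^ 2) :
    ∫ t : ℝ, f ((t : ℂ) + Complex.I * (c : ℂ)) = ∫ t : ℝ, f ((t : ℂ) + Complex.I * (d : ℂ)) := by
  let S : Set ℂ := {z | c < z.im} ∩ {z | z.im < d}
  have hS : IsOpen S := (isOpen_lt continuous_const Complex.continuous_im).inter
    (isOpen_lt Complex.continuous_im continuous_const)
  have hS0 : S ∈ 𝓝 (0:ℂ) := hS.mem_nhds ⟨by simpa using hc, by simpa using hd⟩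
  set F := Function.update f 0 (limUnder (𝓝[≠] 0) f) with hF
  have hFd : DifferentiableOn ℂ F S := by
    refine Complex.differentiableOn_update_limUnder_of_isLittleO hS0 ?_ ?_
    · intro z hz
      exact (hf z hz.1.1.le hz.1.2.le hz.2).differentiableWithinAt
    · refine Asymptotics.isLittleO_of_tendsto' ?_ ?_
      · filter_upwards [self_mem_nhdsWithin] with z hz h
        simp at h
        exact absurd h hz
      · have h1 : Tendsto (fun w : ℂ => w * f 0) (𝓝[≠] 0) (𝓝 0) := by
          have : Tendsto (fun w : ℂ => w * f 0) (𝓝 0) (𝓝 (0 * f 0)) := by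
            apply Continuous.tendsto; fun_prop
          rw [zero_mul] at this
          exact this.mono_left nhdsWithin_le_nhds
        have := h0.sub h1
        rw [sub_zero] at this
        refine this.congr fun w => ?_
        simp [div_eq_mul_inv]; ring
  have hev : ∀ z : ℂ, z ≠ 0 → F =ᶠ[𝓝 z] f := by
    intro z hz
    filter_upwards [isOpen_ne.mem_nhds hz] with w hw
    exact Function.update_of_ne hw _ _
  have key := shift_contour (f := F) (c := c) (d := d) (C := C) (by linarith) (by
    intro z h1 h2
    by_cases hz : z = 0
    · subst hz
      exact (hFd 0 (mem_of_mem_nhds hS0)).differentiableAt hS0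
    · exact ((hev z hz).differentiableAt_iff).mpr (hf z h1 h2 hz)) (by
    intro t u ht h1 h2
    have : ((t : ℂ) + Complex.I * (u : ℂ)) ≠ 0 := by
      intro h
      have := congrArg Complex.re h
      simp at this
      subst this
      simp at ht
      linarith
    rw [(hev _ this).eq_of_nhds]
    exact hb t u ht h1 h2)
  have hne : ∀ t u : ℝ, u ≠ 0 → ((t : ℂ) + Complex.I * (u : ℂ)) ≠ 0 := by
    intro t u hu h
    have := congrArg Complex.im h
    simp at this
    exact hu this
  calc _ = ∫ t : ℝ, F ((t : ℂ) + Complex.I * (c : ℂ)) := by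
        congr 1; ext t; rw [(hev _ (hne t c hc.ne)).eq_of_nhds]
    _ = _ := key
    _ = _ := by congr 1; ext t; rw [(hev _ (hne t d hd.ne')).eq_of_nhds]

lemma sinh_abs_le_norm (w : ℂ) : Real.sinh |w.re| ≤ ‖Complex.sinh w‖ := by
  have h : Complex.sinh w = (Complex.exp w - Complex.exp (-w)) / 2 := rfl
  have e1 : |Real.sinh w.re| = Real.sinh |w.re| := by
    rcases le_total 0 w.re with h | h
    · rw [abs_of_nonneg h, abs_of_nonneg (Real.sinh_nonneg_iff.mpr h)]
    · rw [abs_of_nonpos h, abs_of_nonpos (Real.sinh_nonpos_iff.mpr h), Real.sinh_neg]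
  rw [← e1, h, norm_div, Real.sinh_eq, abs_div]
  have := abs_norm_sub_norm_le (Complex.exp w) (Complex.exp (-w))
  rw [Complex.norm_exp, Complex.norm_exp, Complex.neg_re] at this
  simp only [Complex.norm_ofNat, Nat.abs_ofNat]
  gcongr

lemma sinh_ne_zero_of_im {w : ℂ} (h1 : |w.im| < π) (h2 : w ≠ 0) : Complex.sinh w ≠ 0 := by
  intro h
  have := sinh_abs_le_norm w
  rw [h, norm_zero, Real.sinh_nonpos_iff] at this
  have hre : w.re = 0 := abs_eq_zero.mp (le_antisymm this (abs_nonneg _))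
  have hw : w = (w.im : ℂ) * Complex.I := by
    apply Complex.ext <;> simp [hre]
  rw [hw, Complex.sinh_mul_I] at h
  have hs : Real.sin w.im = 0 := by
    have h' : Complex.sin (w.im : ℂ) = 0 := by
      rcases mul_eq_zero.mp h with h | h
      · exact h
      · exact absurd h Complex.I_ne_zero
    exact_mod_cast h'
  rw [Real.sin_eq_zero_iff_of_lt_of_lt (abs_lt.mp h1).1 (abs_lt.mp h1).2] at hs
  apply h2
  rw [hw, hs]; simp

lemma line_ne_zero (t : ℝ) {u : ℝ} (hu : u ≠ 0) : ((t : ℂ) + Complex.I * (u : ℂ)) ≠ 0 := by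
  intro h
  have := congrArg Complex.im h
  simp at this
  exact hu this

lemma line_ne_zero' {t : ℝ} (u : ℝ) (ht : 1 ≤ |t|) : ((t : ℂ) + Complex.I * (u : ℂ)) ≠ 0 := by
  intro h
  have := congrArg Complex.re h
  simp at this
  subst this
  simp at ht
  linarith

lemma sinh_line_ne_zero {β : ℝ} (hβ : 0 < β) (t : ℝ) {u : ℝ} (h0 : u ≠ 0) (h1 : |u| < π / β) :
    Complex.sinh ((β : ℂ) * ((t : ℂ) + Complex.I * (u : ℂ))) ≠ 0 := by
  apply sinh_ne_zero_of_im
  · simp [abs_mul, abs_of_pos hβ]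
    rwa [lt_div_iff₀' hβ] at h1
  · exact mul_ne_zero (by exact_mod_cast hβ.ne') (line_ne_zero t h0)

lemma sinh_mul_ne_zero {β : ℝ} (hβ : 0 < β) {w : ℂ} (h0 : w ≠ 0) (h1 : |w.im| < π / β) :
    Complex.sinh ((β : ℂ) * w) ≠ 0 := by
  apply sinh_ne_zero_of_im
  · simp [abs_mul, abs_of_pos hβ]
    rwa [lt_div_iff₀' hβ] at h1
  · exact mul_ne_zero (by exact_mod_cast hβ.ne') h0

/-- constant in the estimate of `1/sinh`. -/
lemma inv_sinh_bound {β : ℝ} (hβ : 0 < β) : ∃ c : ℝ, 0 < c ∧ ∀ t u : ℝ, 1 ≤ |t| →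
    ‖(Complex.sinh ((β : ℂ) * ((t : ℂ) + Complex.I * (u : ℂ))))⁻¹‖ ≤ c * Real.exp (-β * |t|) := by
  have hlt : Real.exp (-2 * β) < 1 := by
    rw [Real.exp_lt_one_iff]; linarith
  refine ⟨((1 - Real.exp (-2 * β)) / 2)⁻¹, by apply inv_pos.mpr; linarith, fun t u ht => ?_⟩
  have h := sinh_abs_le_norm ((β : ℂ) * ((t : ℂ) + Complex.I * (u : ℂ)))
  have hre : ((β : ℂ) * ((t : ℂ) + Complex.I * (u : ℂ))).re = β * t := by simp
  rw [hre, abs_mul, abs_of_pos hβ] at h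
  have h2 : (1 - Real.exp (-2 * β)) / 2 * Real.exp (β * |t|) ≤ Real.sinh (β * |t|) := by
    rw [Real.sinh_eq]
    have : Real.exp (-(β * |t|)) ≤ Real.exp (-2 * β) * Real.exp (β * |t|) := by
      rw [← Real.exp_add]
      apply Real.exp_le_exp.mpr
      nlinarith
    linarith
  rw [norm_inv, neg_mul β, Real.exp_neg (β * |t|), ← mul_inv]
  apply inv_anti₀
  · have : 0 < 1 - Real.exp (-2 * β) := by linarith
    positivity
  · exact h2.trans h

lemma exp_neg_le_div_sq {δ : ℝ} (hδ : 0 < δ) {t : ℝ} (ht : 1 ≤ |t|) :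
    Real.exp (-δ * |t|) ≤ (2 / δ ^ 2) / t ^ 2 := by
  have h := Real.quadratic_le_exp_of_nonneg (x := δ * |t|) (by positivity)
  have ht2 : 0 < t ^ 2 := by rw [← sq_abs]; positivity
  rw [neg_mul, Real.exp_neg, div_div, ← one_div, div_le_div_iff₀ (Real.exp_pos _) (by positivity)]
  have : (δ * |t|) ^ 2 = δ ^ 2 * t ^ 2 := by rw [mul_pow, sq_abs]
  have h3 : 0 ≤ δ * |t| := by positivity
  nlinarith

lemma tendsto_mul_inv_sinh {β : ℝ} (hβ : 0 < β) :
    Tendsto (fun w : ℂ => w * (Complex.sinh ((β : ℂ) * w))⁻¹) (𝓝[≠] 0) (𝓝 (β : ℂ)⁻¹) := by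
  have h1 : HasDerivAt (fun w : ℂ => Complex.sinh ((β : ℂ) * w)) (β : ℂ) 0 := by
    have := ((hasDerivAt_id (0:ℂ)).const_mul (β : ℂ)).csinh
    simpa using this
  have h2 := hasDerivAt_iff_tendsto_slope.mp h1
  have h3 := h2.inv₀ (by exact_mod_cast hβ.ne')
  refine h3.congr fun w => ?_
  simp [slope_def_field, div_eq_mul_inv]

lemma differentiableAt_inv_sinh {β : ℝ} (hβ : 0 < β) {w : ℂ} (h0 : w ≠ 0) (h1 : |w.im| < π / β) :
    DifferentiableAt ℂ (fun w : ℂ => (Complex.sinh ((β : ℂ) * w))⁻¹) w := by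
  apply DifferentiableAt.inv
  · fun_prop
  · exact sinh_mul_ne_zero hβ h0 h1

lemma integral_inv_cosh {β : ℝ} (hβ : 0 < β) : ∫ t : ℝ, (Real.cosh (β * t))⁻¹ = π / β := by
  have hd : ∀ t : ℝ, HasDerivAt (fun t : ℝ => 2 / β * Real.arctan (Real.exp (β * t)))
      ((Real.cosh (β * t))⁻¹) t := by
    intro t
    have h1 : HasDerivAt (fun t : ℝ => Real.exp (β * t)) (Real.exp (β * t) * β) t := by
      have := ((hasDerivAt_id t).const_mul β).exp
      simpa using this
    refine (h1.arctan.const_mul (2 / β)).congr_deriv ?_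
    rw [Real.cosh_eq, Real.exp_neg]
    have := Real.exp_pos (β * t)
    field_simp
    try ring
  have hIntg : Integrable (fun t : ℝ => (Real.cosh (β * t))⁻¹) := by
    have hi := (integrable_exp_neg_abs' hβ).const_mul 2
    have hc : Continuous (fun t : ℝ => (Real.cosh (β * t))⁻¹) :=
      Continuous.inv₀ (by fun_prop) (fun t => (Real.cosh_pos _).ne')
    refine hi.mono' hc.aestronglyMeasurable (ae_of_all _ fun t => ?_)
    rw [norm_inv, Real.norm_of_nonneg (Real.cosh_pos _).le, ← Real.cosh_abs, abs_mul, abs_of_pos hβ,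
      neg_mul, Real.exp_neg]
    have h1 := Real.exp_pos (β * |t|)
    have h2 := Real.exp_pos (-(β * |t|))
    rw [Real.cosh_eq, inv_div, div_eq_mul_inv]
    gcongr
    linarith
  have hbot : Tendsto (fun t : ℝ => 2 / β * Real.arctan (Real.exp (β * t))) atBot (𝓝 0) := by
    have h1 : Tendsto (fun t : ℝ => Real.exp (β * t)) atBot (𝓝 0) :=
      Real.tendsto_exp_atBot.comp (tendsto_id.const_mul_atBot hβ)
    have h2 := (Real.continuous_arctan.tendsto 0).comp h1
    have h3 := h2.const_mul (2 / β)
    simpa using h3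
  have htop : Tendsto (fun t : ℝ => 2 / β * Real.arctan (Real.exp (β * t))) atTop (𝓝 (2 / β * (π / 2))) := by
    have h1 : Tendsto (fun t : ℝ => Real.exp (β * t)) atTop atTop :=
      Real.tendsto_exp_atTop.comp (tendsto_id.const_mul_atTop hβ)
    exact ((Real.tendsto_arctan_atTop.mono_right nhdsWithin_le_nhds).comp h1).const_mul _
  rw [integral_of_hasDerivAt_of_tendsto hd hIntg hbot htop]
  field_simp
  try ring

lemma integral_inv_sinh {β ε : ℝ} (hβ : 0 < β) (h0 : 0 < ε) (h1 : ε < π / β) :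
    ∫ t : ℝ, (Complex.sinh ((β : ℂ) * ((t : ℂ) + Complex.I * (ε : ℂ))))⁻¹ =
      -(π : ℂ) * Complex.I / β := by
  obtain ⟨c, hc, hcb⟩ := inv_sinh_bound hβ
  have key : ∀ u v : ℝ, 0 < u → u ≤ v → v < π / β →
      ∫ t : ℝ, (Complex.sinh ((β : ℂ) * ((t : ℂ) + Complex.I * (u : ℂ))))⁻¹ =
      ∫ t : ℝ, (Complex.sinh ((β : ℂ) * ((t : ℂ) + Complex.I * (v : ℂ))))⁻¹ := by
    intro u v hu huv hv
    refine shift_contour (f := fun w : ℂ => (Complex.sinh ((β : ℂ) * w))⁻¹)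
      (C := c * (2 / β ^ 2)) huv ?_ ?_
    · intro z hz1 hz2
      apply differentiableAt_inv_sinh hβ
      · rintro rfl
        simp at hz1; linarith
      · rw [abs_of_pos (by linarith)]; linarith
    · intro t y ht _ _
      refine (hcb t y ht).trans ?_
      rw [mul_div_assoc]
      gcongr
      exact exp_neg_le_div_sq hβ ht
  have hmid : ∫ t : ℝ, (Complex.sinh ((β : ℂ) * ((t : ℂ) + Complex.I * ((π / β / 2 : ℝ) : ℂ))))⁻¹ =
      -(π : ℂ) * Complex.I / β := by
    have hb' : (β : ℂ) ≠ 0 := by exact_mod_cast hβ.ne'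
    have : ∀ t : ℝ, (Complex.sinh ((β : ℂ) * ((t : ℂ) + Complex.I * ((π / β / 2 : ℝ) : ℂ))))⁻¹ =
        -Complex.I * (((Real.cosh (β * t))⁻¹ : ℝ) : ℂ) := by
      intro t
      have e : (β : ℂ) * ((t : ℂ) + Complex.I * ((π / β / 2 : ℝ) : ℂ)) =
          (β * t : ℂ) + (π / 2 : ℂ) * Complex.I := by
        push_cast
        field_simp
      rw [e, Complex.sinh_add, Complex.sinh_mul_I, Complex.cosh_mul_I, Complex.cos_pi_div_two,
        Complex.sin_pi_div_two]
      push_cast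
      rw [mul_zero, zero_add, one_mul, mul_inv, Complex.inv_I]
      ring
    simp_rw [this]
    rw [integral_const_mul, integral_complex_ofReal, integral_inv_cosh hβ]
    push_cast
    ring
  have hp : 0 < π / β := by positivity
  rcases le_total ε (π / β / 2) with h | h
  · rw [key ε _ h0 h (by linarith), hmid]
  · rw [← key _ ε (by linarith) h h1, hmid]

lemma norm_ker_strip (z : ℂ) {A u : ℝ} (hu : |u| ≤ A) (t : ℝ) :
    ‖Complex.exp (-2 * Complex.I * z * ((t : ℂ) + Complex.I * (u : ℂ)))‖ ≤
      Real.exp (2 * A * |z.re|) * Real.exp (2 * |z.im| * |t|) := by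
  refine (norm_ker_le u z t le_rfl).trans ?_
  refine mul_le_mul_of_nonneg_right (Real.exp_le_exp.mpr ?_) (Real.exp_pos _).le
  calc 2 * u * z.re ≤ |2 * u * z.re| := le_abs_self _
    _ = 2 * |u| * |z.re| := by rw [abs_mul, abs_mul]; simp
    _ ≤ _ := by gcongr

lemma continuous_inv_sinh_line {β ε : ℝ} (hβ : 0 < β) (h0 : 0 < ε) (h1 : ε < π / β) :
    Continuous (fun t : ℝ => (Complex.sinh ((β : ℂ) * ((t : ℂ) + Complex.I * (ε : ℂ))))⁻¹) := by
  refine Continuous.inv₀ (by fun_prop) (fun t => ?_)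
  exact sinh_line_ne_zero hβ t h0.ne' (by rwa [abs_of_pos h0])

lemma integral_ker_inv_sinh {β ε : ℝ} (hβ : 0 < β) (h0 : 0 < ε) (h1 : ε < π / β) {z : ℂ}
    (hz : 2 * |z.im| < β) :
    (∫ t : ℝ, Complex.exp (-2 * Complex.I * z * ((t : ℂ) + Complex.I * (ε : ℂ))) *
      (Complex.sinh ((β : ℂ) * ((t : ℂ) + Complex.I * (ε : ℂ))))⁻¹) *
      (1 + Complex.exp (-2 * π * z / β)) = -2 * (π : ℂ) * Complex.I / β := by
  obtain ⟨c, hc, hcb⟩ := inv_sinh_bound hβ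
  have hb' : (β : ℂ) ≠ 0 := by exact_mod_cast hβ.ne'
  have hp : 0 < π / β := by positivity
  obtain ⟨C', -, hC'⟩ := expDecay_of_large (continuous_inv_sinh_line hβ h0 h1)
    (fun t ht => hcb t ε ht)
  have hIntg := lap_integrable (ε := ε) (continuous_inv_sinh_line hβ h0 h1) hC' hz
  have hint0 : Integrable (fun t : ℝ => (Complex.sinh ((β : ℂ) * ((t : ℂ) + Complex.I * (ε : ℂ))))⁻¹) := by
    have := lap_integrable (ε := ε) (z := 0) (continuous_inv_sinh_line hβ h0 h1) hC' (by simpa using hβ)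
    simpa using this
  have J0 := integral_inv_sinh hβ h0 h1
  set J := (∫ t : ℝ, Complex.exp (-2 * Complex.I * z * ((t : ℂ) + Complex.I * (ε : ℂ))) *
      (Complex.sinh ((β : ℂ) * ((t : ℂ) + Complex.I * (ε : ℂ))))⁻¹) with hJ
  set δ := β - 2 * |z.im| with hδ
  have hδ0 : 0 < δ := by rw [hδ]; linarith
  set M := Real.exp (2 * (π / β) * |z.re|) with hM
  have key := shift_contour_removable (f := fun w : ℂ =>
      (Complex.exp (-2 * Complex.I * z * w) - 1) * (Complex.sinh ((β : ℂ) * w))⁻¹)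
      (c := ε - π / β) (d := ε) (C := (M + 1) * c * (2 / δ ^ 2)) (by linarith) h0 (by
        intro w hw1 hw2 hw0
        apply DifferentiableAt.mul (by fun_prop)
        apply differentiableAt_inv_sinh hβ hw0
        rw [abs_lt]; constructor <;> linarith) (by
        have h1 := tendsto_mul_inv_sinh hβ
        have h2 : Tendsto (fun w : ℂ => Complex.exp (-2 * Complex.I * z * w) - 1) (𝓝[≠] 0) (𝓝 0) := by
          have : Tendsto (fun w : ℂ => Complex.exp (-2 * Complex.I * z * w) - 1) (𝓝 0)
            (𝓝 (Complex.exp (-2 * Complex.I * z * 0) - 1)) := by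
            apply Continuous.tendsto; fun_prop
          simp only [mul_zero, Complex.exp_zero, sub_self] at this
          exact this.mono_left nhdsWithin_le_nhds
        have := h2.mul h1
        rw [zero_mul] at this
        refine this.congr fun w => by ring) (by
        intro t u ht hu1 hu2
        have hu : |u| ≤ π / β := by rw [abs_le]; constructor <;> linarith
        rw [norm_mul]
        have e1 : ‖Complex.exp (-2 * Complex.I * z * ((t : ℂ) + Complex.I * (u : ℂ))) - 1‖ ≤
            (M + 1) * Real.exp (2 * |z.im| * |t|) := by
          refine (norm_sub_le _ _).trans ?_
          have a1 := norm_ker_strip z hu t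
          have a2 : 1 ≤ Real.exp (2 * |z.im| * |t|) := Real.one_le_exp (by positivity)
          rw [norm_one]
          rw [← hM] at a1
          linarith
        calc _ ≤ ((M + 1) * Real.exp (2 * |z.im| * |t|)) * (c * Real.exp (-β * |t|)) :=
              mul_le_mul e1 (hcb t u ht) (norm_nonneg _) (by positivity)
          _ = (M + 1) * c * (Real.exp (2 * |z.im| * |t|) * Real.exp (-β * |t|)) := by ring
          _ = (M + 1) * c * Real.exp (-δ * |t|) := by
              rw [← Real.exp_add, hδ]; ring_nf
          _ ≤ (M + 1) * c * ((2 / δ ^ 2) / t ^ 2) := by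
              gcongr
              exact exp_neg_le_div_sq hδ0 ht
          _ = _ := by ring)
  have e2 : ∫ t : ℝ, (Complex.exp (-2 * Complex.I * z * ((t : ℂ) + Complex.I * (ε : ℂ))) - 1) *
      (Complex.sinh ((β : ℂ) * ((t : ℂ) + Complex.I * (ε : ℂ))))⁻¹ = J - -(π : ℂ) * Complex.I / β := by
    rw [← J0, hJ, ← integral_sub hIntg hint0]
    congr 1; ext t; ring
  have e3 : ∫ t : ℝ, (Complex.exp (-2 * Complex.I * z * ((t : ℂ) + Complex.I * ((ε - π / β : ℝ) : ℂ))) - 1) *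
      (Complex.sinh ((β : ℂ) * ((t : ℂ) + Complex.I * ((ε - π / β : ℝ) : ℂ))))⁻¹ =
      -(π : ℂ) * Complex.I / β - Complex.exp (-2 * π * z / β) * J := by
    rw [← J0, hJ, ← integral_const_mul, ← integral_sub hint0 (hIntg.const_mul _)]
    congr 1; ext t
    have a1 : (β : ℂ) * ((t : ℂ) + Complex.I * ((ε - π / β : ℝ) : ℂ)) =
        (β : ℂ) * ((t : ℂ) + Complex.I * (ε : ℂ)) - π * Complex.I := by
      push_cast; field_simp; ring
    have a2 : -2 * Complex.I * z * ((t : ℂ) + Complex.I * ((ε - π / β : ℝ) : ℂ)) =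
        -2 * π * z / β + -2 * Complex.I * z * ((t : ℂ) + Complex.I * (ε : ℂ)) := by
      push_cast
      linear_combination (-2 * z * (-π / β)) * Complex.I_sq
    have a3 : ∀ x : ℂ, Complex.sinh (x - π * Complex.I) = - Complex.sinh x := by
      intro x
      rw [Complex.sinh_sub, Complex.sinh_mul_I, Complex.cosh_mul_I]
      simp
    rw [a1, a2, a3, Complex.exp_add, inv_neg]
    ring
  rw [e2, e3] at key
  linear_combination -key

lemma exp_integral_ker {β ε : ℝ} (hβ : 0 < β) (h0 : 0 < ε) (h1 : ε < π / β) {z : ℂ}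
    (hz : 2 * |z.im| < β) :
    Complex.exp ((-1 / 2) * ∫ t : ℝ,
      Complex.exp (-2 * Complex.I * z * ((t : ℂ) + Complex.I * (ε : ℂ))) *
      (((t : ℂ) + Complex.I * (ε : ℂ)) * Complex.sinh ((β : ℂ) * ((t : ℂ) + Complex.I * (ε : ℂ))))⁻¹) =
      1 + Complex.exp (2 * π * z / β) := by
  obtain ⟨c, hc, hcb⟩ := inv_sinh_bound hβ
  have hb' : (β : ℂ) ≠ 0 := by exact_mod_cast hβ.ne'
  set k : ℝ → ℂ := fun t => (((t : ℂ) + Complex.I * (ε : ℂ)) *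
      Complex.sinh ((β : ℂ) * ((t : ℂ) + Complex.I * (ε : ℂ))))⁻¹ with hk
  have hkc : Continuous k := by
    refine Continuous.inv₀ (by fun_prop) (fun t => mul_ne_zero (line_ne_zero t h0.ne') ?_)
    exact sinh_line_ne_zero hβ t h0.ne' (by rwa [abs_of_pos h0])
  obtain ⟨C', -, hC'⟩ := expDecay_of_large (C := ε⁻¹ * c) (s := β) hkc (by
    intro t ht
    rw [hk]
    simp only
    rw [mul_inv, norm_mul, mul_assoc]
    refine mul_le_mul ?_ (hcb t ε ht) (norm_nonneg _) (by positivity)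
    rw [norm_inv]
    apply inv_anti₀ h0
    have := Complex.abs_im_le_norm ((t : ℂ) + Complex.I * (ε : ℂ))
    simpa [abs_of_pos h0] using this)
  set Φ : ℂ → ℂ := fun z => ∫ t : ℝ,
      Complex.exp (-2 * Complex.I * z * ((t : ℂ) + Complex.I * (ε : ℂ))) * k t with hΦ
  -- derivative
  have hder : ∀ x : ℂ, 2 * |x.im| < β → HasDerivAt Φ (-2 * Complex.I *
      ∫ t : ℝ, Complex.exp (-2 * Complex.I * x * ((t : ℂ) + Complex.I * (ε : ℂ))) *
      (Complex.sinh ((β : ℂ) * ((t : ℂ) + Complex.I * (ε : ℂ))))⁻¹) x := by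
    intro x hx
    refine (lap_hasDerivAt (ε := ε) hkc hC' hx).congr_deriv ?_
    rw [← integral_const_mul]
    congr 1; ext t
    rw [hk]
    have := line_ne_zero t h0.ne'
    simp only
    rw [mul_inv]
    field_simp
  let T : ℝ → ℂ := fun r => Complex.exp ((1 / 2) * Φ (z + r)) * (1 + Complex.exp (2 * π * (z + r) / β))
  have hT : ∀ r : ℝ, HasDerivAt T 0 r := by
    intro r
    have him : (z + r).im = z.im := by simp
    have hx : 2 * |(z + r).im| < β := by rwa [him]
    have hshift : HasDerivAt (fun r : ℂ => z + r) 1 (r : ℂ) := (hasDerivAt_id _).const_add z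
    have d1 : HasDerivAt (fun r : ℂ => Φ (z + r)) _ (r : ℂ) := (hder _ hx).comp (r : ℂ) hshift
    have d2 := ((d1.const_mul (1 / 2)).cexp)
    have d3 : HasDerivAt (fun r : ℂ => (1 + Complex.exp (2 * π * (z + r) / β)))
      (Complex.exp (2 * π * (z + r) / β) * (2 * π * 1 / β)) (r : ℂ) :=
      (((hshift.const_mul (2 * (π : ℂ))).div_const (β : ℂ)).cexp).const_add 1
    have d4 := (d2.mul d3).comp_ofReal
    refine d4.congr_deriv ?_
    have hJ := integral_ker_inv_sinh hβ h0 h1 hx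
    set J := ∫ t : ℝ, Complex.exp (-2 * Complex.I * (z + r) * ((t : ℂ) + Complex.I * (ε : ℂ))) *
      (Complex.sinh ((β : ℂ) * ((t : ℂ) + Complex.I * (ε : ℂ))))⁻¹
    have hE : Complex.exp (2 * π * (z + r) / β) * Complex.exp (-2 * π * (z + r) / β) = 1 := by
      rw [← Complex.exp_add, ← Complex.exp_zero]; congr 1; ring
    have hI := Complex.I_sq
    set E := Complex.exp (2 * π * (z + r) / β)
    set E' := Complex.exp (-2 * π * (z + r) / β)
    have hJ2 : J * (1 + E) = E * (-2 * (π : ℂ) * Complex.I / β) := by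
      rw [← hJ]; linear_combination (- J) * hE
    set X := Complex.exp (1 / 2 * Φ (z + r))
    have : (X * (1 / 2 * (-2 * I * J * 1))) * (1 + E) + X * (E * (2 * π * 1 / β)) = 0 := by
      linear_combination (-I * X) * hJ2 + (2 * π / β * X * E) * hI
    exact this
  have hconst : ∀ r : ℝ, T r = T 0 := fun r =>
    is_const_of_deriv_eq_zero (fun r => (hT r).differentiableAt) (fun r => (hT r).deriv) r 0
  obtain ⟨C2, hC2⟩ := lap_bound ε hC' hz
  have hlim : Tendsto T atBot (𝓝 1) := by
    have hr : Tendsto (fun r : ℝ => z.re + r) atBot atBot := tendsto_atBot_add_const_left _ _ tendsto_id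
    have l1 : Tendsto (fun r : ℝ => Φ (z + r)) atBot (𝓝 0) := by
      refine squeeze_zero_norm (a := fun r : ℝ => C2 * Real.exp (2 * ε * (z.re + r))) (fun r => ?_) ?_
      · have := hC2 (z + r) (by simp)
        rw [Complex.add_re, Complex.ofReal_re] at this
        exact this
      · have : Tendsto (fun r : ℝ => Real.exp (2 * ε * (z.re + r))) atBot (𝓝 0) :=
          Real.tendsto_exp_atBot.comp (hr.const_mul_atBot (by positivity))
        simpa using this.const_mul C2
    have l2 : Tendsto (fun r : ℝ => Complex.exp (2 * π * (z + r) / β)) atBot (𝓝 0) := by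
      rw [tendsto_zero_iff_norm_tendsto_zero]
      have : Tendsto (fun r : ℝ => Real.exp ((2 * π / β) * (z.re + r))) atBot (𝓝 0) :=
          Real.tendsto_exp_atBot.comp (hr.const_mul_atBot (by positivity))
      refine this.congr fun r => ?_
      rw [Complex.norm_exp]
      congr 1
      have : (2 * π * (z + r) / β : ℂ) = ((2 * π / β : ℝ) : ℂ) * (z + r) := by push_cast; ring
      rw [this, Complex.re_ofReal_mul]; simp
    have l3 : Tendsto (fun r : ℝ => Complex.exp ((1 / 2) * Φ (z + r))) atBot (𝓝 1) := by
      have := (Complex.continuous_exp.tendsto _).comp (l1.const_mul (1 / 2))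
      rw [mul_zero, Complex.exp_zero] at this
      exact this
    have := l3.mul (l2.const_add 1)
    rw [add_zero, mul_one] at this
    exact this
  have hT0 : T 0 = 1 := by
    refine tendsto_nhds_unique (tendsto_const_nhds.congr fun r => (hconst r).symm) hlim
  have hT0' : Complex.exp ((1 / 2) * Φ z) * (1 + Complex.exp (2 * π * z / β)) = 1 := by
    have : T 0 = Complex.exp ((1 / 2) * Φ z) * (1 + Complex.exp (2 * π * z / β)) := by
      simp [T]
    rw [← this, hT0]
  have h5 : Complex.exp ((-1 / 2) * Φ z) * Complex.exp ((1 / 2) * Φ z) = 1 := by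
    rw [← Complex.exp_add, ← Complex.exp_zero]; congr 1; ring
  calc Complex.exp ((-1 / 2) * Φ z) = Complex.exp ((-1 / 2) * Φ z) *
        (Complex.exp ((1 / 2) * Φ z) * (1 + Complex.exp (2 * π * z / β))) := by rw [hT0', mul_one]
    _ = _ := by rw [← mul_assoc, h5, one_mul]

/-- contour parameter -/
def epb (b : ℝ) : ℝ := π * min b b⁻¹ / 2

/-- logarithm of `eb`. -/
def Lb (b : ℝ) (z : ℂ) : ℂ := (1 / 4 : ℂ) * ∫ t : ℝ, ebIntegrand b (epb b) z t

lemma eb_eq (b : ℝ) (z : ℂ) : eb b z = Complex.exp (Lb b z) := rfl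

lemma epb_pos {b : ℝ} (hb : 0 < b) : 0 < epb b := by
  have : 0 < min b b⁻¹ := lt_min hb (inv_pos.mpr hb)
  unfold epb; positivity

lemma epb_lt {b : ℝ} (hb : 0 < b) : epb b < π / b := by
  have h1 : min b b⁻¹ ≤ b⁻¹ := min_le_right _ _
  have h2 : 0 < b⁻¹ := inv_pos.mpr hb
  unfold epb
  rw [div_eq_mul_inv π b]
  nlinarith [Real.pi_pos, mul_pos Real.pi_pos h2, mul_le_mul_of_nonneg_left h1 Real.pi_pos.le]

lemma epb_lt' {b : ℝ} (hb : 0 < b) : epb b < π / b⁻¹ := by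
  have h1 : min b b⁻¹ ≤ b := min_le_left _ _
  unfold epb
  rw [div_eq_mul_inv π b⁻¹, inv_inv]
  nlinarith [Real.pi_pos, mul_pos Real.pi_pos hb, mul_le_mul_of_nonneg_left h1 Real.pi_pos.le]

/-- kernel -/
def kb (b ε : ℝ) (t : ℝ) : ℂ :=
  (((t : ℂ) + Complex.I * (ε : ℂ)) *
      Complex.sinh ((b : ℂ) * ((t : ℂ) + Complex.I * (ε : ℂ))) *
      Complex.sinh (((b⁻¹ : ℝ) : ℂ) * ((t : ℂ) + Complex.I * (ε : ℂ))))⁻¹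

lemma ebIntegrand_eq (b ε : ℝ) (z : ℂ) (t : ℝ) : ebIntegrand b ε z t =
    Complex.exp (-2 * Complex.I * z * ((t : ℂ) + Complex.I * (ε : ℂ))) * kb b ε t := by
  unfold ebIntegrand kb
  rw [div_eq_mul_inv, Complex.ofReal_inv]

lemma Lb_eq (b : ℝ) (z : ℂ) : Lb b z = (1 / 4 : ℂ) * ∫ t : ℝ,
    Complex.exp (-2 * Complex.I * z * ((t : ℂ) + Complex.I * (epb b : ℂ))) * kb b (epb b) t := by
  unfold Lb
  simp_rw [ebIntegrand_eq]

lemma kb_continuous {b : ℝ} (hb : 0 < b) : Continuous (kb b (epb b)) := by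
  have h0 := epb_pos hb
  refine Continuous.inv₀ (by fun_prop) (fun t => mul_ne_zero (mul_ne_zero (line_ne_zero t h0.ne') ?_) ?_)
  · exact sinh_line_ne_zero hb t h0.ne' (by rw [abs_of_pos h0]; exact epb_lt hb)
  · exact sinh_line_ne_zero (inv_pos.mpr hb) t h0.ne' (by rw [abs_of_pos h0]; exact epb_lt' hb)

lemma one_le_norm_line {t : ℝ} (u : ℝ) (ht : 1 ≤ |t|) : |t| ≤ ‖((t : ℂ) + Complex.I * (u : ℂ))‖ := by
  have := Complex.abs_re_le_norm ((t : ℂ) + Complex.I * (u : ℂ))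
  simpa using this

lemma kb_large {b : ℝ} (hb : 0 < b) : ∃ C : ℝ, 0 < C ∧ ∀ t u : ℝ, 1 ≤ |t| →
    ‖kb b u t‖ ≤ C * Real.exp (-(b + b⁻¹) * |t|) := by
  obtain ⟨c, hc, hcb⟩ := inv_sinh_bound hb
  obtain ⟨c', hc', hcb'⟩ := inv_sinh_bound (inv_pos.mpr hb)
  refine ⟨c * c', by positivity, fun t u ht => ?_⟩
  unfold kb
  rw [mul_inv, mul_inv, norm_mul, norm_mul]
  have h1 : ‖((t : ℂ) + Complex.I * (u : ℂ))⁻¹‖ ≤ 1 := by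
    rw [norm_inv]
    exact inv_le_one_of_one_le₀ (ht.trans (one_le_norm_line u ht))
  calc _ ≤ (1 * (c * Real.exp (-b * |t|))) * (c' * Real.exp (-b⁻¹ * |t|)) := by
        refine mul_le_mul (mul_le_mul h1 (hcb t u ht) (norm_nonneg _) zero_le_one)
          (hcb' t u ht) (norm_nonneg _) (by positivity)
    _ = c * c' * (Real.exp (-b * |t|) * Real.exp (-b⁻¹ * |t|)) := by ring
    _ = _ := by rw [← Real.exp_add]; ring_nf

lemma kb_decay {b : ℝ} (hb : 0 < b) : ∃ C : ℝ, 0 < C ∧ ∀ t : ℝ,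
    ‖kb b (epb b) t‖ ≤ C * Real.exp (-(b + b⁻¹) * |t|) := by
  obtain ⟨C, -, hC⟩ := kb_large hb
  exact expDecay_of_large (kb_continuous hb) (fun t ht => hC t _ ht)

lemma Lb_bound {b : ℝ} (hb : 0 < b) {s : ℝ} (hs : 2 * s < b + b⁻¹) :
    ∃ C : ℝ, 0 < C ∧ ∀ z : ℂ, |z.im| ≤ s → ‖Lb b z‖ ≤ C * Real.exp (2 * epb b * z.re) := by
  obtain ⟨C, -, hC⟩ := kb_decay hb
  obtain ⟨C', hC'⟩ := lap_bound (epb b) hC hs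
  refine ⟨max C' 1, by positivity, fun z hz => ?_⟩
  rw [Lb_eq, norm_mul]
  have h1 := hC' z hz
  have h2 : C' * Real.exp (2 * epb b * z.re) ≤ max C' 1 * Real.exp (2 * epb b * z.re) := by
    gcongr
    exact le_max_left _ _
  have h3 : ‖(1 / 4 : ℂ)‖ ≤ 1 := by norm_num
  have := mul_le_mul h3 (h1.trans h2) (norm_nonneg _) zero_le_one
  rwa [one_mul] at this

lemma Lb_differentiableAt {b : ℝ} (hb : 0 < b) {z : ℂ} (hz : 2 * |z.im| < b + b⁻¹) :
    DifferentiableAt ℂ (Lb b) z := by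
  obtain ⟨C, -, hC⟩ := kb_decay hb
  have := (lap_hasDerivAt (ε := epb b) (kb_continuous hb) hC hz).differentiableAt.const_mul (1 / 4 : ℂ)
  have he : Lb b = fun z => (1 / 4 : ℂ) * ∫ t : ℝ,
    Complex.exp (-2 * Complex.I * z * ((t : ℂ) + Complex.I * (epb b : ℂ))) * kb b (epb b) t :=
    funext (Lb_eq b)
  rw [he]; exact this

lemma Lb_integrable {b : ℝ} (hb : 0 < b) {z : ℂ} (hz : 2 * |z.im| < b + b⁻¹) :
    Integrable (fun t : ℝ =>
    Complex.exp (-2 * Complex.I * z * ((t : ℂ) + Complex.I * (epb b : ℂ))) * kb b (epb b) t) := by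
  obtain ⟨C, -, hC⟩ := kb_decay hb
  exact lap_integrable (kb_continuous hb) hC hz

lemma Lb_shift {b : ℝ} (hb : 0 < b) {z : ℂ} (hz : 2 * |z.im| < b⁻¹) :
    Complex.exp (Lb b (z - Complex.I * b / 2) - Lb b (z + Complex.I * b / 2)) =
      1 + Complex.exp (2 * π * b * z) := by
  have hb' : (b : ℂ) ≠ 0 := by exact_mod_cast hb.ne'
  have i1 : (z - Complex.I * b / 2).im = z.im - b / 2 := by simp
  have i2 : (z + Complex.I * b / 2).im = z.im + b / 2 := by simp
  have hz' := abs_lt.mp (show |z.im| < b⁻¹ / 2 by linarith)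
  have m1 : 2 * |(z - Complex.I * b / 2).im| < b + b⁻¹ := by
    rw [i1]
    have : |z.im - b / 2| < (b + b⁻¹) / 2 := by rw [abs_lt]; constructor <;> linarith
    linarith
  have m2 : 2 * |(z + Complex.I * b / 2).im| < b + b⁻¹ := by
    rw [i2]
    have : |z.im + b / 2| < (b + b⁻¹) / 2 := by rw [abs_lt]; constructor <;> linarith
    linarith
  have h := exp_integral_ker (inv_pos.mpr hb) (epb_pos hb) (epb_lt' hb) hz
  have e : (2 * π * z / ((b⁻¹ : ℝ) : ℂ) : ℂ) = 2 * π * b * z := by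
    push_cast; field_simp
  rw [e] at h
  rw [← h]
  congr 1
  rw [Lb_eq, Lb_eq, ← mul_sub, ← integral_sub (Lb_integrable hb m1) (Lb_integrable hb m2),
    ← integral_const_mul, ← integral_const_mul]
  congr 1; ext t
  unfold kb
  have n1 := line_ne_zero t (epb_pos hb).ne'
  have n2 : Complex.sinh ((b : ℂ) * ((t : ℂ) + Complex.I * (epb b : ℂ))) ≠ 0 :=
    sinh_line_ne_zero hb t (epb_pos hb).ne' (by rw [abs_of_pos (epb_pos hb)]; exact epb_lt hb)
  set w := (t : ℂ) + Complex.I * (epb b : ℂ)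
  have a1 : -2 * Complex.I * (z - Complex.I * b / 2) * w = -2 * Complex.I * z * w + -(b * w) := by
    linear_combination (b * w) * Complex.I_sq
  have a2 : -2 * Complex.I * (z + Complex.I * b / 2) * w = -2 * Complex.I * z * w + (b * w) := by
    linear_combination (-b * w) * Complex.I_sq
  have a3 : Complex.sinh (b * w) = (Complex.exp (b * w) - Complex.exp (-(b * w))) / 2 := rfl
  have a4 : Complex.exp (-(b * w)) = Complex.exp (b * w) - 2 * Complex.sinh (b * w) := by
    rw [a3]; ring
  rw [a1, a2, Complex.exp_add, Complex.exp_add, a4, mul_inv, mul_inv, mul_inv]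
  generalize Complex.sinh (b * w) = X at n2 ⊢
  generalize Complex.sinh (((b⁻¹ : ℝ) : ℂ) * w) = Y
  generalize Complex.exp (b * w) = E
  generalize Complex.exp (-2 * Complex.I * z * w) = E2
  have n3 : X * X⁻¹ = 1 := mul_inv_cancel₀ n2
  linear_combination (-(1 / 2 : ℂ) * E2 * w⁻¹ * Y⁻¹) * n3

/-! ### inversion formula -/

lemma tendsto_exp_rem (c : ℂ) : Tendsto (fun w : ℂ =>
    (Complex.exp (c * w) - (1 + c * w + (c * w) ^ 2 / 2 + (c * w) ^ 3 / 6)) / w ^ 3)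
    (𝓝[≠] 0) (𝓝 0) := by
  have hlim : Tendsto (fun w : ℂ => ‖c‖ ^ 4 * ‖w‖) (𝓝[≠] 0) (𝓝 0) := by
    have : Tendsto (fun w : ℂ => ‖c‖ ^ 4 * ‖w‖) (𝓝 0) (𝓝 (‖c‖ ^ 4 * ‖(0:ℂ)‖)) := by
      apply Continuous.tendsto; fun_prop
    simp only [norm_zero, mul_zero] at this
    exact this.mono_left nhdsWithin_le_nhds
  have hsm : ∀ᶠ w : ℂ in 𝓝[≠] 0, ‖c * w‖ ≤ 1 := by
    have : Tendsto (fun w : ℂ => ‖c * w‖) (𝓝 0) (𝓝 ‖c * 0‖) := by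
      apply Continuous.tendsto; fun_prop
    simp only [mul_zero, norm_zero] at this
    exact ((this.eventually (eventually_lt_nhds zero_lt_one)).filter_mono nhdsWithin_le_nhds).mono
      fun w hw => hw.le
  refine squeeze_zero_norm' ?_ hlim
  filter_upwards [hsm, self_mem_nhdsWithin] with w hw hw0
  have hw0' : 0 < ‖w‖ := norm_pos_iff.mpr hw0
  have := Complex.exp_bound hw (n := 4) (by norm_num)
  simp only [Finset.sum_range_succ, Finset.sum_range_zero, Nat.factorial] at this
  rw [norm_div, norm_pow, div_le_iff₀ (by positivity)]
  have h2 : ‖Complex.exp (c * w) - (1 + c * w + (c * w) ^ 2 / 2 + (c * w) ^ 3 / 6)‖ ≤ ‖c * w‖ ^ 4 := by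
    refine le_trans (le_of_eq ?_) (this.trans ?_)
    · congr 1
      norm_num
    · have h4 : 0 ≤ ‖c * w‖ ^ 4 := by positivity
      norm_num
      norm_num at h4
      nlinarith
  refine h2.trans (le_of_eq ?_)
  rw [norm_mul]; ring

lemma jet_cosh (c : ℂ) : Tendsto (fun w : ℂ =>
    (Complex.exp (c * w) + Complex.exp (-c * w) - 2) / w ^ 2) (𝓝[≠] 0) (𝓝 (c ^ 2)) := by
  have hw : Tendsto (fun w : ℂ => w) (𝓝[≠] 0) (𝓝 0) := tendsto_id.mono_left nhdsWithin_le_nhds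
  have := (hw.mul ((tendsto_exp_rem c).add (tendsto_exp_rem (-c)))).add_const (c ^ 2)
  rw [zero_mul, zero_add] at this
  refine this.congr' ?_
  filter_upwards [self_mem_nhdsWithin] with w hw0
  have : w ≠ 0 := hw0
  field_simp
  ring

lemma jet_sinh (c : ℂ) : Tendsto (fun w : ℂ =>
    (Complex.sinh (c * w) - c * w) / w ^ 3) (𝓝[≠] 0) (𝓝 (c ^ 3 / 6)) := by
  have := (((tendsto_exp_rem c).sub (tendsto_exp_rem (-c))).const_mul (1 / 2)).add_const (c ^ 3 / 6)
  rw [sub_zero, mul_zero, zero_add] at this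
  refine this.congr' ?_
  filter_upwards [self_mem_nhdsWithin] with w hw0
  have : w ≠ 0 := hw0
  have a3 : Complex.sinh (c * w) = (Complex.exp (c * w) - Complex.exp (-(c * w))) / 2 := rfl
  rw [a3, neg_mul]
  field_simp
  ring

lemma eventually_sinh_ne {β : ℝ} (hβ : 0 < β) : ∀ᶠ w : ℂ in 𝓝[≠] 0, Complex.sinh ((β : ℂ) * w) ≠ 0 := by
  have : ∀ᶠ w : ℂ in 𝓝[≠] 0, |w.im| < π / β := by
    have h : Tendsto (fun w : ℂ => |w.im|) (𝓝 0) (𝓝 |(0:ℂ).im|) := by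
      apply Continuous.tendsto; fun_prop
    simp only [Complex.zero_im, abs_zero] at h
    exact (h.eventually (eventually_lt_nhds (show 0 < π / β by positivity))).filter_mono nhdsWithin_le_nhds
  filter_upwards [this, self_mem_nhdsWithin] with w h1 h2
  exact sinh_mul_ne_zero hβ h2 h1

lemma jet_A {β : ℝ} (hβ : 0 < β) : Tendsto (fun w : ℂ =>
    (β * w * (Complex.sinh ((β : ℂ) * w))⁻¹ - 1) / w ^ 2) (𝓝[≠] 0) (𝓝 (-(β : ℂ) ^ 2 / 6)) := by
  have hb' : (β : ℂ) ≠ 0 := by exact_mod_cast hβ.ne'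
  have := ((jet_sinh β).mul (tendsto_mul_inv_sinh hβ)).neg
  have e : -((β : ℂ) ^ 3 / 6 * (β : ℂ)⁻¹) = -(β : ℂ) ^ 2 / 6 := by field_simp
  rw [e] at this
  refine this.congr' ?_
  filter_upwards [self_mem_nhdsWithin, eventually_sinh_ne hβ] with w hw0 hs
  have : w ≠ 0 := hw0
  field_simp
  ring

lemma integral_inv_cube {ε : ℝ} (h0 : 0 < ε) :
    Integrable (fun t : ℝ => (((t : ℂ) + Complex.I * (ε : ℂ)) ^ 3)⁻¹) ∧
    ∫ t : ℝ, (((t : ℂ) + Complex.I * (ε : ℂ)) ^ 3)⁻¹ = 0 := by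
  have hne := fun t : ℝ => line_ne_zero t h0.ne'
  have hc : Continuous (fun t : ℝ => (((t : ℂ) + Complex.I * (ε : ℂ)) ^ 3)⁻¹) :=
    Continuous.inv₀ (by fun_prop) (fun t => pow_ne_zero _ (hne t))
  have hsq : ∀ t : ℝ, ‖(t : ℂ) + Complex.I * (ε : ℂ)‖ ^ 2 = t ^ 2 + ε ^ 2 := by
    intro t
    rw [Complex.sq_norm, Complex.normSq_apply]; simp; ring
  have hge : ∀ t : ℝ, ε ≤ ‖(t : ℂ) + Complex.I * (ε : ℂ)‖ := by
    intro t
    have := Complex.abs_im_le_norm ((t : ℂ) + Complex.I * (ε : ℂ))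
    simpa [abs_of_pos h0] using this
  have hIntg : Integrable (fun t : ℝ => (((t : ℂ) + Complex.I * (ε : ℂ)) ^ 3)⁻¹) := by
    set m := min 1 (ε ^ 2)
    have hm : 0 < m := lt_min one_pos (by positivity)
    have hi := (integrable_inv_one_add_sq).const_mul ((ε * m)⁻¹)
    refine hi.mono' hc.aestronglyMeasurable (ae_of_all _ fun t => ?_)
    rw [norm_inv, norm_pow, ← mul_inv]
    apply inv_anti₀ (by positivity)
    have h3 : ‖(t : ℂ) + Complex.I * (ε : ℂ)‖ ^ 3 = (t ^ 2 + ε ^ 2) * ‖(t : ℂ) + Complex.I * (ε : ℂ)‖ := by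
      rw [pow_succ, hsq]
    have h4 : ε * m * (1 + t ^ 2) = m * (1 + t ^ 2) * ε := by ring
    rw [h3, h4]
    refine mul_le_mul ?_ (hge t) h0.le (by positivity)
    have h1 : m ≤ 1 := min_le_left _ _
    have h2 : m ≤ ε ^ 2 := min_le_right _ _
    nlinarith [sq_nonneg t]
  refine ⟨hIntg, ?_⟩
  have hd : ∀ t : ℝ, HasDerivAt (fun t : ℝ => (-1 / 2 : ℂ) * (((t : ℂ) + Complex.I * (ε : ℂ)) ^ 2)⁻¹)
      ((((t : ℂ) + Complex.I * (ε : ℂ)) ^ 3)⁻¹) t := by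
    intro t
    have h1 : HasDerivAt (fun w : ℂ => (w + Complex.I * (ε : ℂ))) 1 (t : ℂ) :=
      (hasDerivAt_id _).add_const _
    have h2 := (((h1.pow 2).inv (pow_ne_zero _ (hne t))).const_mul (-1 / 2 : ℂ)).comp_ofReal
    refine h2.congr_deriv ?_
    have := hne t
    field_simp
    simp
    ring
  have hlim : ∀ l : Filter ℝ, Tendsto (fun t : ℝ => t ^ 2) l atTop →
      Tendsto (fun t : ℝ => (-1 / 2 : ℂ) * (((t : ℂ) + Complex.I * (ε : ℂ)) ^ 2)⁻¹) l (𝓝 0) := by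
    intro l hl
    refine squeeze_zero_norm (a := fun t : ℝ => (t ^ 2 + ε ^ 2)⁻¹) (fun t => ?_) ?_
    · rw [norm_mul, norm_inv, norm_pow, hsq]
      have : (0:ℝ) ≤ (t ^ 2 + ε ^ 2)⁻¹ := by positivity
      norm_num
      linarith
    · exact tendsto_inv_atTop_zero.comp (tendsto_atTop_add_const_right _ _ hl)
  have hbot : Tendsto (fun t : ℝ => t ^ 2) atBot atTop := by
    have := (tendsto_pow_atTop (α := ℝ) two_ne_zero).comp tendsto_neg_atBot_atTop
    refine this.congr fun t => by simp
  rw [integral_of_hasDerivAt_of_tendsto hd hIntg (hlim _ hbot)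
    (hlim _ (tendsto_pow_atTop two_ne_zero)), sub_zero]

lemma Lb_inversion {b : ℝ} (hb : 0 < b) {z : ℂ} (hz : 2 * |z.im| < b + b⁻¹) :
    Lb b z + Lb b (-z) = π * Complex.I * (z ^ 2 + ((b : ℂ) ^ 2 + (b : ℂ)⁻¹ ^ 2) / 12) := by
  have hb' : (b : ℂ) ≠ 0 := by exact_mod_cast hb.ne'
  have hbi := inv_pos.mpr hb
  have hbi' : ((b⁻¹ : ℝ) : ℂ) ≠ 0 := by exact_mod_cast hbi.ne'
  set β := b⁻¹ with hβ
  set ε := epb b with hε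
  have h0 : 0 < ε := epb_pos hb
  have h1 : ε < π / b := epb_lt hb
  have h2 : ε < π / β := epb_lt' hb
  set V : ℂ := -4 * z ^ 2 - ((b : ℂ) ^ 2 + (β : ℂ) ^ 2) / 3 with hV
  let f : ℂ → ℂ := fun w => (Complex.exp (-2 * Complex.I * z * w) + Complex.exp (-2 * Complex.I * (-z) * w)) *
    (w * Complex.sinh ((b : ℂ) * w) * Complex.sinh ((β : ℂ) * w))⁻¹
  let r : ℂ → ℂ := fun w => f w - 2 * (w ^ 3)⁻¹ - V * β * (Complex.sinh ((β : ℂ) * w))⁻¹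
  obtain ⟨Ck, hCk, hkl⟩ := kb_large hb
  obtain ⟨c', hc', hcb'⟩ := inv_sinh_bound hbi
  set δ := b + β - 2 * |z.im| with hδ
  have hδ0 : 0 < δ := by rw [hδ]; linarith
  set M := Real.exp (2 * ε * |z.re|) with hM
  have key := shift_contour_removable (f := r) (c := -ε) (d := ε)
    (C := 2 * M * Ck * (2 / δ ^ 2) + 2 + ‖V * β‖ * c' * (2 / β ^ 2)) (by linarith) h0 (by
      intro w hw1 hw2 hw0
      have hwi : |w.im| ≤ ε := abs_le.mpr ⟨hw1, hw2⟩
      have n1 := sinh_mul_ne_zero hb hw0 (lt_of_le_of_lt hwi h1)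
      have n2 := sinh_mul_ne_zero hbi hw0 (lt_of_le_of_lt hwi h2)
      have d1 : DifferentiableAt ℂ f w := by
        apply DifferentiableAt.mul (by fun_prop)
        exact DifferentiableAt.inv (by fun_prop) (mul_ne_zero (mul_ne_zero hw0 n1) n2)
      have d2 : DifferentiableAt ℂ (fun w : ℂ => 2 * (w ^ 3)⁻¹) w := by
        have h3 : DifferentiableAt ℂ (fun w : ℂ => (w ^ 3)⁻¹) w :=
          DifferentiableAt.inv (h := fun w : ℂ => w ^ 3) (by fun_prop) (pow_ne_zero _ hw0)
        exact h3.const_mul _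
      exact (d1.sub d2).sub ((differentiableAt_inv_sinh hbi hw0 (lt_of_le_of_lt hwi h2)).const_mul _)) (by
      have j1 := jet_cosh (-2 * Complex.I * z)
      have j2 := jet_A hb
      have j3 := jet_A hbi
      have t2 := (tendsto_mul_inv_sinh hb).const_mul (b : ℂ)
      have t3 := (tendsto_mul_inv_sinh hbi).const_mul (β : ℂ)
      rw [mul_inv_cancel₀ hb'] at t2
      rw [mul_inv_cancel₀ hbi'] at t3
      have := (((j1.mul (t2.mul t3)).add (((j2.mul t3).add j3).const_mul 2))).sub (t3.const_mul V)
      have e : (-2 * Complex.I * z) ^ 2 * (1 * 1) + 2 * (-(b : ℂ) ^ 2 / 6 * 1 + -(β : ℂ) ^ 2 / 6) - V * 1 = 0 := by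
        rw [hV]
        linear_combination (4 * z ^ 2) * Complex.I_sq
      rw [e] at this
      refine this.congr' ?_
      filter_upwards [self_mem_nhdsWithin, eventually_sinh_ne hb, eventually_sinh_ne hbi] with w hw0 n1 n2
      have hw : w ≠ 0 := hw0
      have hbb : (b : ℂ) * β = 1 := by rw [hβ]; push_cast; field_simp
      simp only [r, f]
      have e1 : -2 * Complex.I * (-z) * w = -(-2 * Complex.I * z) * w := by ring
      rw [e1]
      set N := Complex.exp (-2 * Complex.I * z * w) + Complex.exp (-(-2 * Complex.I * z) * w)
      set X := Complex.sinh ((b : ℂ) * w)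
      set Y := Complex.sinh ((β : ℂ) * w)
      have e2 : (b : ℂ) * (w * X⁻¹) * (β * (w * Y⁻¹)) = w ^ 2 * X⁻¹ * Y⁻¹ := by
        linear_combination (w ^ 2 * X⁻¹ * Y⁻¹) * hbb
      have e3 : (b * w * X⁻¹ - 1) / w ^ 2 * (β * (w * Y⁻¹)) + (β * w * Y⁻¹ - 1) / w ^ 2 =
          (w ^ 2 * X⁻¹ * Y⁻¹ - 1) / w ^ 2 := by
        rw [← e2]; ring
      rw [e2, e3]
      field_simp
      ring) (by
      intro t u ht hu1 hu2
      have hu : |u| ≤ ε := abs_le.mpr ⟨hu1, hu2⟩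
      have ht2 : 0 < t ^ 2 := by rw [← sq_abs]; positivity
      have b1 : ‖f ((t : ℂ) + Complex.I * (u : ℂ))‖ ≤ 2 * M * Ck * ((2 / δ ^ 2) / t ^ 2) := by
        have a1 := norm_ker_strip z hu t
        have a2 := norm_ker_strip (-z) hu t
        simp only [Complex.neg_re, Complex.neg_im, abs_neg] at a2
        have a3 := hkl t u ht
        unfold kb at a3
        simp only [f]
        rw [norm_mul]
        calc _ ≤ (2 * M * Real.exp (2 * |z.im| * |t|)) * (Ck * Real.exp (-(b + β) * |t|)) := by
              refine mul_le_mul ((norm_add_le _ _).trans ?_) a3 (norm_nonneg _) (by positivity)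
              linarith
          _ = 2 * M * Ck * (Real.exp (2 * |z.im| * |t|) * Real.exp (-(b + β) * |t|)) := by ring
          _ = 2 * M * Ck * Real.exp (-δ * |t|) := by
              rw [← Real.exp_add, hδ]; ring_nf
          _ ≤ _ := by
              gcongr
              exact exp_neg_le_div_sq hδ0 ht
      have b2 : ‖2 * (((t : ℂ) + Complex.I * (u : ℂ)) ^ 3)⁻¹‖ ≤ 2 * (1 / t ^ 2) := by
        rw [norm_mul, norm_inv, norm_pow, Complex.norm_ofNat, ← one_div]
        have a1 := one_le_norm_line u ht
        have : t ^ 2 ≤ ‖(t : ℂ) + Complex.I * (u : ℂ)‖ ^ 3 := by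
          calc t ^ 2 = |t| ^ 2 := (sq_abs t).symm
            _ ≤ |t| ^ 3 := pow_le_pow_right₀ ht (by norm_num)
            _ ≤ _ := by gcongr
        gcongr
      have b3 : ‖V * β * (Complex.sinh ((β : ℂ) * ((t : ℂ) + Complex.I * (u : ℂ))))⁻¹‖ ≤
          ‖V * β‖ * (c' * ((2 / β ^ 2) / t ^ 2)) := by
        rw [norm_mul]
        gcongr
        refine (hcb' t u ht).trans ?_
        gcongr
        exact exp_neg_le_div_sq hbi ht
      simp only [r]
      refine (norm_sub_le _ _).trans ((add_le_add ((norm_sub_le _ _).trans (add_le_add b1 b2)) b3).trans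
        (le_of_eq ?_))
      ring)
  have hodd : ∀ w : ℂ, r (-w) = - r w := by
    intro w
    simp only [r, f]
    have e1 : -2 * Complex.I * z * -w = -2 * Complex.I * (-z) * w := by ring
    have e2 : -2 * Complex.I * -z * -w = -2 * Complex.I * z * w := by ring
    have e3 : (-w) ^ 3 = -(w ^ 3) := by ring
    have s1 : Complex.sinh ((b : ℂ) * -w) = -Complex.sinh ((b : ℂ) * w) := by
      rw [mul_neg, Complex.sinh_neg]
    have s2 : Complex.sinh ((β : ℂ) * -w) = -Complex.sinh ((β : ℂ) * w) := by
      rw [mul_neg, Complex.sinh_neg]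
    rw [e1, e2, e3, s1, s2]
    generalize Complex.exp (-2 * Complex.I * -z * w) = E1
    generalize Complex.exp (-2 * Complex.I * z * w) = E2
    generalize Complex.sinh ((b : ℂ) * w) = X
    generalize Complex.sinh ((β : ℂ) * w) = Y
    simp only [mul_neg, neg_mul, inv_neg, neg_neg]
    ring
  have hzero : ∫ t : ℝ, r ((t : ℂ) + Complex.I * (ε : ℂ)) = 0 := by
    have e1 : ∫ t : ℝ, r ((t : ℂ) + Complex.I * ((-ε : ℝ) : ℂ)) =
        - ∫ t : ℝ, r ((t : ℂ) + Complex.I * (ε : ℂ)) := by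
      rw [← integral_neg_eq_self, ← integral_neg]
      congr 1; ext t
      rw [← hodd]
      congr 1
      push_cast; ring
    rw [e1] at key
    linear_combination (-1 / 2 : ℂ) * key
  have i1 := Lb_integrable hb hz
  have i2 := Lb_integrable hb (z := -z) (by simpa using hz)
  obtain ⟨i3, z3⟩ := integral_inv_cube h0
  have i4 : Integrable (fun t : ℝ => (Complex.sinh ((β : ℂ) * ((t : ℂ) + Complex.I * (ε : ℂ))))⁻¹) := by
    obtain ⟨C', -, hC'⟩ := expDecay_of_large (continuous_inv_sinh_line hbi h0 h2)
      (fun t ht => hcb' t ε ht)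
    have := lap_integrable (ε := ε) (z := 0) (continuous_inv_sinh_line hbi h0 h2) hC' (by simpa using hbi)
    simpa using this
  have z4 := integral_inv_sinh hbi h0 h2
  have hsum : ∫ t : ℝ, r ((t : ℂ) + Complex.I * (ε : ℂ)) =
      ((∫ t : ℝ, Complex.exp (-2 * Complex.I * z * ((t : ℂ) + Complex.I * (ε : ℂ))) * kb b ε t) +
      (∫ t : ℝ, Complex.exp (-2 * Complex.I * (-z) * ((t : ℂ) + Complex.I * (ε : ℂ))) * kb b ε t)) -
      2 * 0 - V * β * (-(π : ℂ) * Complex.I / β) := by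
    have i12 : Integrable (fun t : ℝ => Complex.exp (-2 * Complex.I * z * ((t : ℂ) + Complex.I * (ε : ℂ))) * kb b ε t +
      Complex.exp (-2 * Complex.I * (-z) * ((t : ℂ) + Complex.I * (ε : ℂ))) * kb b ε t) := i1.add i2
    have i123 : Integrable (fun t : ℝ => Complex.exp (-2 * Complex.I * z * ((t : ℂ) + Complex.I * (ε : ℂ))) * kb b ε t +
      Complex.exp (-2 * Complex.I * (-z) * ((t : ℂ) + Complex.I * (ε : ℂ))) * kb b ε t -
      2 * (((t : ℂ) + Complex.I * (ε : ℂ)) ^ 3)⁻¹) := i12.sub (i3.const_mul 2)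
    rw [← z4, ← z3, ← integral_add i1 i2, ← integral_const_mul, ← integral_const_mul,
      ← integral_sub i12 (i3.const_mul _), ← integral_sub i123 (i4.const_mul _)]
    congr 1; ext t
    simp only [r, f, kb]
    ring
  rw [hzero] at hsum
  rw [Lb_eq, Lb_eq]
  have e : V * β * (-(π : ℂ) * Complex.I / β) = -V * π * Complex.I := by field_simp
  rw [e, hV] at hsum
  have e5 : (b : ℂ)⁻¹ = (β : ℂ) := by rw [hβ]; push_cast; rfl
  rw [e5]
  linear_combination (-1 / 4 : ℂ) * hsum

lemma wb_eq_exp1 (b : ℝ) (hb : 0 < b) (z : ℂ) : wb b z =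
    Complex.exp (π * Complex.I * ((b : ℂ) ^ 2 + (b : ℂ)⁻¹ ^ 2) / 24 + π * Complex.I * z ^ 2 / 2 - Lb b z) := by
  have hb' : (b : ℂ) ≠ 0 := by exact_mod_cast hb.ne'
  unfold wb cb
  rw [eb_eq, Complex.exp_sub, Complex.exp_add]
  congr 3
  have : (b : ℂ) * (b : ℂ)⁻¹ = 1 := mul_inv_cancel₀ hb'
  linear_combination (-(π : ℂ) * Complex.I / 24 * ((b : ℂ) + (b : ℂ)⁻¹) ^ 2) * Complex.I_sq + (π * Complex.I / 12) * this

lemma wb_eq_exp {b : ℝ} (hb : 0 < b) {z : ℂ} (hz : 2 * |z.im| < b + b⁻¹) : wb b z =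
    Complex.exp ((Lb b (-z) - Lb b z) / 2) := by
  rw [wb_eq_exp1 b hb]
  congr 1
  linear_combination (-1 / 2 : ℂ) * Lb_inversion hb hz

lemma wb_ne_zero {b : ℝ} (hb : 0 < b) (z : ℂ) : wb b z ≠ 0 := by
  rw [wb_eq_exp1 b hb]; exact Complex.exp_ne_zero _

lemma wb_neg {b : ℝ} (hb : 0 < b) {z : ℂ} (hz : 2 * |z.im| < b + b⁻¹) : wb b (-z) = (wb b z)⁻¹ := by
  rw [wb_eq_exp hb hz, wb_eq_exp hb (z := -z) (by simpa using hz), ← Complex.exp_neg, neg_neg]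
  congr 1; ring

lemma wb_differentiableAt {b : ℝ} (hb : 0 < b) {z : ℂ} (hz : 2 * |z.im| < b + b⁻¹) :
    DifferentiableAt ℂ (wb b) z := by
  have : wb b = fun z => _ := funext (wb_eq_exp1 b hb)
  rw [this]
  have h := Lb_differentiableAt hb hz
  fun_prop

lemma wb_shift {b : ℝ} (hb : 0 < b) {z : ℂ} (hz : 2 * |z.im| < b⁻¹) :
    wb b (z + Complex.I * b / 2) = 2 * Complex.cosh (π * b * z) * wb b (z - Complex.I * b / 2) := by
  have h := Lb_shift hb hz
  have a3 : Complex.cosh (π * b * z) = (Complex.exp (π * b * z) + Complex.exp (-(π * b * z))) / 2 := rfl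
  have e1 : 2 * Complex.cosh (π * b * z) = Complex.exp (-(π * b * z)) * (1 + Complex.exp (2 * π * b * z)) := by
    rw [a3, mul_add, ← Complex.exp_add]
    ring_nf
  rw [e1, ← h, wb_eq_exp1 b hb, wb_eq_exp1 b hb, ← Complex.exp_add, ← Complex.exp_add]
  congr 1
  linear_combination ( π * z * b) * Complex.I_sq

lemma wb_bound {b : ℝ} (hb : 0 < b) {s : ℝ} (hs : 2 * s < b + b⁻¹) :
    ∃ C : ℝ, 0 < C ∧ ∀ z : ℂ, |z.im| ≤ s → ‖wb b z‖ ≤ C * Real.exp (π * |z.re| * z.im) := by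
  obtain ⟨C, hC, hL⟩ := Lb_bound hb hs
  have hn : ∀ z : ℂ, ‖wb b z‖ = Real.exp (-(π * z.re * z.im) - (Lb b z).re) := by
    intro z
    rw [wb_eq_exp1 b hb, Complex.norm_exp]
    congr 1
    have e : (π * Complex.I * ((b : ℂ) ^ 2 + (b : ℂ)⁻¹ ^ 2) / 24 : ℂ) =
      ((π * (b ^ 2 + b⁻¹ ^ 2) / 24 : ℝ) : ℂ) * Complex.I := by push_cast; ring
    have e2 : (π * Complex.I * z ^ 2 / 2 : ℂ) = ((π / 2 : ℝ) : ℂ) * (Complex.I * z ^ 2) := by push_cast; ring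
    rw [e, e2, Complex.sub_re, Complex.add_re, Complex.re_ofReal_mul, Complex.re_ofReal_mul]
    simp [pow_two]
    ring
  have hlb : ∀ z : ℂ, |z.im| ≤ s → z.re ≤ 0 → |(Lb b z).re| ≤ C := by
    intro z hz hr
    refine (Complex.abs_re_le_norm _).trans ((hL z hz).trans ?_)
    have : Real.exp (2 * epb b * z.re) ≤ 1 := by
      rw [Real.exp_le_one_iff]
      have := epb_pos hb
      nlinarith
    nlinarith
  refine ⟨Real.exp C, Real.exp_pos _, fun z hz => ?_⟩
  rw [← Real.exp_add]
  rcases le_total z.re 0 with hr | hr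
  · rw [hn, Real.exp_le_exp, abs_of_nonpos hr]
    have := abs_le.mp (hlb z hz hr)
    nlinarith
  · have hz2 : 2 * |z.im| < b + b⁻¹ := by linarith
    have h1 := wb_neg hb (z := -z) (by simpa using hz2)
    rw [neg_neg] at h1
    rw [h1, norm_inv, hn, ← Real.exp_neg, Real.exp_le_exp, abs_of_nonneg hr]
    have := abs_le.mp (hlb (-z) (by simpa using hz) (by simpa using hr))
    simp only [Complex.neg_re, Complex.neg_im]
    nlinarith

lemma Dfun_eq {b : ℝ} (hb : 0 < b) {α y : ℂ} (hz : 2 * |(y - α).im| < b + b⁻¹) :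
    Dfun b α y = wb b (y + α) * wb b (α - y) := by
  unfold Dfun
  rw [← neg_sub y α, wb_neg hb hz, div_eq_mul_inv]

lemma Dfun_bound {b : ℝ} (hb : 0 < b) (α : ℂ) {s : ℝ} (hs : 2 * s < b + b⁻¹) :
    ∃ C : ℝ, 0 < C ∧ ∀ y : ℂ, |y.im| + |α.im| ≤ s →
      ‖Dfun b α y‖ ≤ C * Real.exp (2 * π * |y.re| * α.im) := by
  obtain ⟨C, hC, h⟩ := wb_bound hb hs
  refine ⟨C * C * Real.exp (2 * π * |α.re| * s), by positivity, fun y hy => ?_⟩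
  have h1 : |(y + α).im| ≤ s := (abs_add_le _ _).trans hy
  have h2 : |(y - α).im| ≤ s := (abs_sub _ _).trans hy
  have h3 : |(α - y).im| ≤ s := by rw [← neg_sub, Complex.neg_im, abs_neg]; exact h2
  rw [Dfun_eq hb (by linarith), norm_mul]
  have k1 := h _ h1
  have k2 := h _ h3
  refine (mul_le_mul k1 k2 (norm_nonneg _) (by positivity)).trans ?_
  have e : C * Real.exp (π * |(y + α).re| * (y + α).im) * (C * Real.exp (π * |(α - y).re| * (α - y).im)) =
    C * C * Real.exp (π * (|(y + α).re| * (y + α).im + |(α - y).re| * (α - y).im)) := by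
    rw [mul_mul_mul_comm, ← Real.exp_add]; ring_nf
  rw [e, mul_assoc _ (Real.exp _), ← Real.exp_add]
  refine mul_le_mul_of_nonneg_left (Real.exp_le_exp.mpr ?_) (by positivity)
  have gen : ∀ p q r : ℝ, |r| ≤ s → |p - q| ≤ |α.re| → p * r ≤ q * r + |α.re| * s := by
    intro p q r hr hpq
    have : (p - q) * r ≤ |α.re| * s := by
      refine (le_abs_self _).trans ?_
      rw [abs_mul]
      exact mul_le_mul hpq hr (abs_nonneg _) (abs_nonneg _)
    linarith
  have g1 := gen |(y + α).re| |y.re| (y + α).im h1 (by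
    have := abs_abs_sub_abs_le (y + α).re y.re
    simpa using this)
  have g2 := gen |(α - y).re| |y.re| (α - y).im h3 (by
    have := abs_abs_sub_abs_le (y - α).re y.re
    rw [← neg_sub y α, Complex.neg_re, abs_neg]
    simpa using this)
  have : |(y + α).re| * (y + α).im + |(α - y).re| * (α - y).im ≤ 2 * (|y.re| * α.im) + 2 * (|α.re| * s) := by
    have e1 : (y + α).im = y.im + α.im := rfl
    have e2 : (α - y).im = α.im - y.im := rfl
    rw [e1] at g1 ⊢
    rw [e2] at g2 ⊢
    nlinarith
  have := mul_le_mul_of_nonneg_left this Real.pi_pos.le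
  linarith

lemma Dfun_differentiableAt {b : ℝ} (hb : 0 < b) {α y : ℂ} (hz : 2 * (|y.im| + |α.im|) < b + b⁻¹) :
    DifferentiableAt ℂ (Dfun b α) y := by
  have h1 : 2 * |(y + α).im| < b + b⁻¹ := by
    have := abs_add_le y.im α.im
    rw [Complex.add_im]; linarith
  have h2 : 2 * |(y - α).im| < b + b⁻¹ := by
    have := abs_sub y.im α.im
    rw [Complex.sub_im]; linarith
  have d1 := wb_differentiableAt hb h1
  have d2 := wb_differentiableAt hb h2
  unfold Dfun
  exact (d1.comp y (differentiableAt_id.add_const α)).div (d2.comp y (differentiableAt_id.sub_const α)) (wb_ne_zero hb _)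

lemma Dfun_ne_zero {b : ℝ} (hb : 0 < b) (α y : ℂ) : Dfun b α y ≠ 0 :=
  div_ne_zero (wb_ne_zero hb _) (wb_ne_zero hb _)

/-! symmetry -/
lemma eb_inv (b : ℝ) (z : ℂ) : eb b⁻¹ z = eb b z := by
  unfold eb ebE
  rw [inv_inv, min_comm]
  congr 2
  congr 1; ext t
  unfold ebIntegrand
  push_cast
  rw [inv_inv]
  congr 1; ring

lemma cb_inv (b : ℝ) : cb b⁻¹ = cb b := by
  unfold cb; push_cast; rw [inv_inv]; ring

lemma wb_inv (b : ℝ) : wb b⁻¹ = wb b := by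
  funext z; unfold wb; rw [eb_inv, cb_inv]

lemma Dfun_inv (b : ℝ) : Dfun b⁻¹ = Dfun b := by
  funext α z; unfold Dfun; rw [wb_inv]

lemma wb_shift' {b : ℝ} (hb : 0 < b) {z : ℂ} (hz : 2 * |z.im| < b) :
    wb b (z + Complex.I * (b : ℂ)⁻¹ / 2) = 2 * Complex.cosh (π * (b : ℂ)⁻¹ * z) * wb b (z - Complex.I * (b : ℂ)⁻¹ / 2) := by
  have := wb_shift (inv_pos.mpr hb) (z := z) (by simpa using hz)
  rw [wb_inv] at this
  push_cast at this
  exact this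

lemma Lb_conj (b : ℝ) (z : ℂ) : (starRingEnd ℂ) (Lb b z) = - Lb b ((starRingEnd ℂ) z) := by
  unfold Lb
  rw [map_mul, ← integral_conj, ← mul_neg, ← integral_neg]
  have h4 : (starRingEnd ℂ) (1 / 4 : ℂ) = 1 / 4 := by rw [map_div₀, map_one, map_ofNat]
  rw [h4, ← integral_neg_eq_self]
  congr 2
  ext t
  unfold ebIntegrand
  set ε := epb b
  have hw : (starRingEnd ℂ) (((-t : ℝ) : ℂ) + Complex.I * (ε : ℂ)) = -((t : ℂ) + Complex.I * (ε : ℂ)) := by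
    simp; ring
  rw [map_div₀, map_mul, map_mul, ← Complex.exp_conj, ← Complex.sinh_conj, ← Complex.sinh_conj, map_mul, map_mul,
    map_mul, map_mul, map_mul, hw]
  simp only [map_neg, map_ofNat, Complex.conj_I, Complex.conj_ofReal, map_inv₀, mul_neg, Complex.sinh_neg, neg_mul, neg_neg]
  rw [← div_neg]

lemma wb_imag {b : ℝ} (hb : 0 < b) {y : ℝ} (hy : 2 * |y| < b + b⁻¹) :
    ∃ r : ℝ, 0 < r ∧ wb b (Complex.I * y) = r := by
  have h1 := Lb_conj b (Complex.I * y)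
  have e : (starRingEnd ℂ) (Complex.I * y) = -(Complex.I * y) := by simp
  rw [e] at h1
  refine ⟨Real.exp (-(Lb b (Complex.I * y)).re), Real.exp_pos _, ?_⟩
  rw [wb_eq_exp hb (by simpa using hy), Complex.ofReal_exp]
  congr 1
  have h2 := Complex.add_conj (Lb b (Complex.I * y))
  push_cast
  push_cast at h2
  linear_combination (-1 / 2 : ℂ) * h2 + (1 / 2 : ℂ) * h1

lemma wb_cb_aux {b : ℝ} (hb : 0 < b) : Tendsto (fun η : ℝ => wb b (cb b - Complex.I * η) / η) (𝓝[>] 0)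
    (𝓝 (2 * (π * b) * wb b (Complex.I * (((b⁻¹ - b) / 2 : ℝ) : ℂ)))) := by
  have hb' : (b : ℂ) ≠ 0 := by exact_mod_cast hb.ne'
  have hbi := inv_pos.mpr hb
  set θ := (b⁻¹ - b) / 2 with hθ
  have hs : Tendsto (fun η : ℝ => ((Real.sin (π * b * η) / η : ℝ) : ℂ)) (𝓝[>] 0) (𝓝 ((π * b : ℝ) : ℂ)) := by
    refine (Complex.continuous_ofReal.tendsto _).comp ?_
    have h1 : HasDerivAt (fun η : ℝ => Real.sin (π * b * η)) (Real.cos (π * b * 0) * (π * b * 1)) 0 :=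
      ((hasDerivAt_id (0:ℝ)).const_mul (π * b)).sin
    have h2 := h1.tendsto_slope
    simp only [mul_zero, Real.cos_zero, one_mul, mul_one] at h2
    refine (h2.mono_left (nhdsWithin_mono _ (fun x hx => ne_of_gt hx))).congr fun η => ?_
    simp [slope_def_field]
  have hc : Tendsto (fun η : ℝ => wb b (Complex.I * θ - Complex.I * η)) (𝓝[>] 0) (𝓝 (wb b (Complex.I * θ))) := by
    have h1 : ContinuousAt (wb b) (Complex.I * θ) := by
      refine (wb_differentiableAt hb ?_).continuousAt
      have : |θ| < (b + b⁻¹) / 2 := by rw [abs_lt, hθ]; constructor <;> linarith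
      simp; linarith
    have h2 : Tendsto (fun η : ℝ => Complex.I * θ - Complex.I * η) (𝓝 0) (𝓝 (Complex.I * θ - Complex.I * (0:ℝ))) := by
      apply Continuous.tendsto; fun_prop
    rw [Complex.ofReal_zero, mul_zero, sub_zero] at h2
    exact h1.tendsto.comp (h2.mono_left nhdsWithin_le_nhds)
  have := (hs.const_mul 2).mul hc
  push_cast at this
  push_cast
  refine this.congr' ?_
  filter_upwards [Ioo_mem_nhdsGT (show (0:ℝ) < b⁻¹ by positivity)] with η hη
  have h3 := wb_shift hb (z := Complex.I * ((b⁻¹ / 2 - η : ℝ) : ℂ)) (by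
    have : |b⁻¹ / 2 - η| < b⁻¹ / 2 := by rw [abs_lt]; constructor <;> linarith [hη.1, hη.2]
    simp only [Complex.mul_im, Complex.I_re, Complex.I_im, Complex.ofReal_re, Complex.ofReal_im]
    simp only [zero_mul, one_mul, zero_add]
    linarith)
  have e1 : Complex.I * ((b⁻¹ / 2 - η : ℝ) : ℂ) + Complex.I * b / 2 = cb b - Complex.I * η := by
    unfold cb; push_cast; ring
  have e2 : Complex.I * ((b⁻¹ / 2 - η : ℝ) : ℂ) - Complex.I * b / 2 = Complex.I * θ - Complex.I * η := by
    rw [hθ]; push_cast; ring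
  have e3 : Complex.cosh (π * b * (Complex.I * ((b⁻¹ / 2 - η : ℝ) : ℂ))) = Complex.sin (π * b * η) := by
    rw [← Complex.cos_pi_div_two_sub, ← Complex.cosh_mul_I]
    congr 1
    push_cast; field_simp
  rw [e1, e2, e3] at h3
  rw [h3]
  push_cast
  ring

lemma wb_cb_limit {b : ℝ} (hb : 0 < b) : Tendsto (fun η : ℝ => wb b (cb b - Complex.I * η) / η) (𝓝[>] 0)
    (𝓝 (2 * π)) := by
  have hb' : (b : ℂ) ≠ 0 := by exact_mod_cast hb.ne'
  have hbi := inv_pos.mpr hb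
  have h1 := wb_cb_aux hb
  have h2 := wb_cb_aux hbi
  rw [wb_inv, cb_inv] at h2
  have h3 := tendsto_nhds_unique h1 h2
  have hθ : |(b⁻¹ - b) / 2| < (b + b⁻¹) / 2 := by rw [abs_lt]; constructor <;> linarith
  obtain ⟨r, hr, hw⟩ := wb_imag hb (y := (b⁻¹ - b) / 2) (by linarith)
  have e : Complex.I * (((b⁻¹⁻¹ - b⁻¹) / 2 : ℝ) : ℂ) = -(Complex.I * (((b⁻¹ - b) / 2 : ℝ) : ℂ)) := by
    rw [inv_inv]; push_cast; ring
  rw [e, wb_neg hb (by simp only [Complex.mul_im, Complex.I_re, Complex.I_im, Complex.ofReal_re, Complex.ofReal_im, zero_mul, one_mul, zero_add]; linarith), hw] at h3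
  rw [hw] at h1
  have hpi : (π : ℝ) ≠ 0 := Real.pi_ne_zero
  have h4 : (2 * (π * b) * r : ℝ) = 2 * (π * b⁻¹) * r⁻¹ := by exact_mod_cast h3
  have h5 : (b * r) ^ 2 = 1 := by
    have hb0 := hb.ne'
    have hr0 := hr.ne'
    field_simp at h4
    nlinarith
  have h6 : b * r = 1 := by
    have : 0 < b * r := by positivity
    nlinarith
  have h7 : (2 * (π * b) * r : ℂ) = 2 * π := by
    have : (b : ℂ) * r = 1 := by exact_mod_cast h6
    linear_combination (2 * π : ℂ) * this
  rwa [h7] at h1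

lemma norm_exp_sub_one_le' (u : ℂ) : ‖Complex.exp u - 1‖ ≤ ‖u‖ * Real.exp ‖u‖ := by
  have := Complex.norm_exp_sub_sum_le_norm_mul_exp u 1
  simpa using this

lemma Dfun_asymp {b : ℝ} (hb : 0 < b) (α : ℂ) (hα : 2 * |α.im| < b + b⁻¹) :
    ∃ C : ℝ, 0 < C ∧ ∀ y : ℝ, 0 ≤ y →
      ‖Dfun b α y * Complex.exp (2 * π * Complex.I * α * y) - 1‖ ≤ C * Real.exp (-(2 * epb b) * y) := by
  obtain ⟨K, hK, hL⟩ := Lb_bound hb hα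
  have he := epb_pos hb
  set K' := 2 * K * Real.exp (2 * epb b * |α.re|) with hK'
  have hKp : 0 < K' := by positivity
  refine ⟨K' * Real.exp K', by positivity, fun y hy => ?_⟩
  have h1 : 2 * |((y : ℂ) - α).im| < b + b⁻¹ := by simpa using hα
  have h2 : 2 * |(-((y : ℂ) + α)).im| < b + b⁻¹ := by simpa using hα
  have e : Dfun b α y * Complex.exp (2 * π * Complex.I * α * y) =
      Complex.exp (Lb b (-((y : ℂ) + α)) - Lb b (α - y)) := by
    have h3 := wb_neg hb h2
    rw [neg_neg] at h3
    rw [Dfun_eq hb h1, h3, wb_eq_exp1 b hb, wb_eq_exp1 b hb, ← Complex.exp_neg, ← Complex.exp_add, ← Complex.exp_add]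
    congr 1
    ring
  rw [e]
  have k1 := hL (-((y : ℂ) + α)) (by simp)
  have k2 := hL (α - y) (by simp)
  have mono : ∀ p : ℝ, p ≤ |α.re| - y → K * Real.exp (2 * epb b * p) ≤
      K * Real.exp (2 * epb b * |α.re|) * Real.exp (-(2 * epb b) * y) := by
    intro p hp
    rw [mul_assoc K, ← Real.exp_add]
    gcongr
    nlinarith
  have m1 := mono (-((y : ℂ) + α)).re (by simp; linarith [neg_abs_le α.re])
  have m2 := mono (α - y).re (by simp; linarith [le_abs_self α.re])
  have hu : ‖Lb b (-((y : ℂ) + α)) - Lb b (α - y)‖ ≤ K' * Real.exp (-(2 * epb b) * y) := by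
    refine (norm_sub_le _ _).trans ?_
    rw [hK']; linarith
  have hu1 : ‖Lb b (-((y : ℂ) + α)) - Lb b (α - y)‖ ≤ K' := by
    refine hu.trans ?_
    have : Real.exp (-(2 * epb b) * y) ≤ 1 := by
      rw [Real.exp_le_one_iff]; nlinarith
    nlinarith
  calc _ ≤ _ := norm_exp_sub_one_le' _
    _ ≤ (K' * Real.exp (-(2 * epb b) * y)) * Real.exp K' := by gcongr
    _ = _ := by ring

lemma strip_const {R : ℂ → ℂ} {s0 : ℝ} (hs0 : π < s0) {C c : ℝ} (hc1 : c < 1)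
    (hd : ∀ z : ℂ, |z.im| < s0 → DifferentiableAt ℂ R z)
    (hp : ∀ z : ℂ, |z.im| < s0 - π → R (z + π * Complex.I) = R (z - π * Complex.I))
    (hg : ∀ z : ℂ, |z.im| ≤ π → ‖R z‖ ≤ C * Real.exp (c * |z.re|)) :
    ∃ K : ℂ, ∀ z : ℂ, |z.im| < s0 → R z = K := by
  set g : ℂ → ℂ := fun u => R (Complex.log u) with hgdef
  have hneg : ∀ u : ℂ, u ≠ 0 → |(-u).arg| < s0 - π → g u = R (Complex.log (-u) + π * Complex.I) := by
    intro u hu harg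
    have hu' : -u ≠ 0 := neg_ne_zero.mpr hu
    have h1 := Complex.neg_pi_lt_arg (-u)
    have h2 := Complex.arg_le_pi (-u)
    rcases le_or_gt ((-u).arg) 0 with h | h
    · have : Complex.log u = Complex.log (-u) + π * Complex.I := by
        rw [← Complex.log_exp (x := Complex.log (-u) + π * Complex.I)]
        · rw [Complex.exp_add, Complex.exp_log hu', Complex.exp_pi_mul_I]; simp
        · simp [Complex.log_im]; linarith [Real.pi_pos]
        · simp [Complex.log_im]; linarith [Real.pi_pos]
      simp only [hgdef]; rw [this]
    · have : Complex.log u = Complex.log (-u) - π * Complex.I := by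
        rw [← Complex.log_exp (x := Complex.log (-u) - π * Complex.I)]
        · rw [Complex.exp_sub, Complex.exp_log hu', Complex.exp_pi_mul_I]; simp
        · simp [Complex.log_im]; linarith [Real.pi_pos]
        · simp [Complex.log_im]; linarith [Real.pi_pos]
      simp only [hgdef]; rw [this, hp _ (by simpa [Complex.log_im] using harg)]
  have hgd : ∀ u : ℂ, u ≠ 0 → DifferentiableAt ℂ g u := by
    intro u hu
    by_cases hs : u ∈ Complex.slitPlane
    · have h1 : DifferentiableAt ℂ R (Complex.log u) := by
        apply hd
        rw [Complex.log_im]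
        exact lt_of_le_of_lt (Complex.abs_arg_le_pi u) hs0
      exact h1.comp u (differentiableAt_id.clog hs)
    · have hs' : u.re < 0 ∧ u.im = 0 := by
        rw [Complex.mem_slitPlane_iff] at hs
        push Not at hs
        refine ⟨lt_of_le_of_ne hs.1 ?_, hs.2⟩
        intro h; exact hu (Complex.ext h hs.2)
      have hs2 : -u ∈ Complex.slitPlane := by
        rw [Complex.mem_slitPlane_iff]; left; simpa using hs'.1
      have harg : (-u).arg = 0 := by
        rw [Complex.arg_eq_zero_iff]; simp [hs'.2, hs'.1.le]
      have hcont : Tendsto (fun v : ℂ => |(-v).arg|) (𝓝 u) (𝓝 |(-u).arg|) :=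
        ((Complex.continuousAt_arg hs2).comp (f := fun v : ℂ => -v) continuousAt_neg).abs
      rw [harg, abs_zero] at hcont
      have hev := hcont.eventually (eventually_lt_nhds (show 0 < s0 - π by linarith))
      have heq : g =ᶠ[𝓝 u] fun v => R (Complex.log (-v) + π * Complex.I) := by
        filter_upwards [hev, eventually_ne_nhds hu] with v h1 h2
        exact hneg v h2 h1
      rw [heq.differentiableAt_iff]
      have h1 : DifferentiableAt ℂ R (Complex.log (-u) + π * Complex.I) := by
        apply hd
        simp [Complex.log_im, harg]
        rw [abs_of_pos Real.pi_pos]; exact hs0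
      have h2 : DifferentiableAt ℂ (fun v : ℂ => Complex.log (-v) + π * Complex.I) u := by
        refine DifferentiableAt.add_const _ ?_
        exact (differentiableAt_id.neg).clog hs2
      exact h1.comp u h2
  have hgb : ∀ u : ℂ, u ≠ 0 → ‖g u‖ ≤ C * Real.exp (c * |Real.log ‖u‖|) := by
    intro u hu
    have := hg (Complex.log u) (by rw [Complex.log_im]; exact Complex.abs_arg_le_pi u)
    rwa [Complex.log_re] at this
  have hlittle : (fun z => g z - g 0) =o[𝓝[≠] 0] fun z => (z - 0)⁻¹ := by
    rw [Asymptotics.isLittleO_iff_tendsto']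
    · have hl : Tendsto (fun u : ℂ => Real.log ‖u‖) (𝓝[≠] 0) atBot :=
        Real.tendsto_log_nhdsGT_zero.comp tendsto_norm_nhdsNE_zero
      have h1 : Tendsto (fun u : ℂ => C * Real.exp ((1 - c) * Real.log ‖u‖)) (𝓝[≠] 0) (𝓝 0) := by
        have : Tendsto (fun u : ℂ => (1 - c) * Real.log ‖u‖) (𝓝[≠] 0) atBot :=
          hl.const_mul_atBot (by linarith)
        simpa using (Real.tendsto_exp_atBot.comp this).const_mul C
      have h2 : Tendsto (fun u : ℂ => g u * u) (𝓝[≠] 0) (𝓝 0) := by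
        refine squeeze_zero_norm' ?_ h1
        have hlt : ∀ᶠ u : ℂ in 𝓝[≠] 0, Real.log ‖u‖ < 0 := hl.eventually (eventually_lt_atBot 0)
        filter_upwards [hlt, self_mem_nhdsWithin] with u hu1 hu2
        have hu3 : 0 < ‖u‖ := norm_pos_iff.mpr hu2
        have := hgb u hu2
        rw [abs_of_neg hu1] at this
        rw [norm_mul]
        calc _ ≤ C * Real.exp (c * -Real.log ‖u‖) * ‖u‖ := by gcongr
          _ = C * (Real.exp (c * -Real.log ‖u‖) * Real.exp (Real.log ‖u‖)) := by
              rw [Real.exp_log hu3]; ring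
          _ = _ := by rw [← Real.exp_add]; ring_nf
      have h3 : Tendsto (fun u : ℂ => g 0 * u) (𝓝[≠] 0) (𝓝 0) := by
        have : Tendsto (fun u : ℂ => g 0 * u) (𝓝 0) (𝓝 (g 0 * 0)) := by
          apply Continuous.tendsto; fun_prop
        rw [mul_zero] at this
        exact this.mono_left nhdsWithin_le_nhds
      have h4 := h2.sub h3
      rw [sub_zero] at h4
      refine h4.congr fun u => ?_
      rw [sub_zero, div_inv_eq_mul]; ring
    · filter_upwards [self_mem_nhdsWithin] with u hu h
      exact absurd h (inv_ne_zero (by simpa using hu))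
  have hG := Complex.differentiableOn_update_limUnder_of_isLittleO (f := g) (s := Set.univ) (c := 0)
    univ_mem (fun u hu => (hgd u hu.2).differentiableWithinAt) hlittle
  set G := Function.update g 0 (limUnder (𝓝[≠] 0) g) with hGdef
  have hGne : ∀ u : ℂ, u ≠ 0 → G u = g u := fun u hu => Function.update_of_ne hu _ _
  have hS : Differentiable ℂ (dslope G 0) :=
    differentiableOn_univ.mp ((Complex.differentiableOn_dslope univ_mem).mpr hG)
  have hlim : Tendsto (dslope G 0) (cocompact ℂ) (𝓝 0) := by
    have hnorm : Tendsto (fun u : ℂ => ‖u‖) (cocompact ℂ) atTop := tendsto_norm_cocompact_atTop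
    have hl : Tendsto (fun u : ℂ => Real.log ‖u‖) (cocompact ℂ) atTop := Real.tendsto_log_atTop.comp hnorm
    have h1 : Tendsto (fun u : ℂ => C * Real.exp ((c - 1) * Real.log ‖u‖) + ‖G 0‖ * ‖u‖⁻¹) (cocompact ℂ) (𝓝 0) := by
      have h2 : Tendsto (fun u : ℂ => (c - 1) * Real.log ‖u‖) (cocompact ℂ) atBot :=
        hl.const_mul_atTop_of_neg (by linarith)
      have h3 := ((Real.tendsto_exp_atBot.comp h2).const_mul C).add
        ((tendsto_inv_atTop_zero.comp hnorm).const_mul ‖G 0‖)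
      simpa using h3
    refine squeeze_zero_norm' ?_ h1
    filter_upwards [hl.eventually (eventually_gt_atTop 0), hnorm.eventually (eventually_gt_atTop 0)] with u hu1 hu2
    have hu : u ≠ 0 := norm_pos_iff.mp hu2
    rw [dslope_of_ne _ hu, slope_def_field, hGne u hu, sub_zero, norm_div, div_eq_mul_inv]
    have := hgb u hu
    rw [abs_of_pos hu1] at this
    have e : Real.exp ((c - 1) * Real.log ‖u‖) = Real.exp (c * Real.log ‖u‖) * ‖u‖⁻¹ := by
      rw [sub_mul, one_mul, Real.exp_sub, Real.exp_log hu2, div_eq_mul_inv]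
    rw [e]
    calc _ ≤ (C * Real.exp (c * Real.log ‖u‖) + ‖G 0‖) * ‖u‖⁻¹ := by
          refine mul_le_mul_of_nonneg_right ((norm_sub_le _ _).trans (by linarith)) (by positivity)
      _ = _ := by ring
  have hconst : ∀ u : ℂ, u ≠ 0 → g u = G 0 := by
    intro u hu
    have h1 := hS.apply_eq_of_tendsto_cocompact u hlim
    rw [dslope_of_ne _ hu, slope_def_field, sub_zero, div_eq_zero_iff] at h1
    rw [← hGne u hu]
    exact sub_eq_zero.mp (h1.resolve_right hu)
  have hin : ∀ z : ℂ, |z.im| < π → R z = G 0 := by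
    intro z hz
    have h1 := hconst (Complex.exp z) (Complex.exp_ne_zero z)
    simp only [hgdef] at h1
    rwa [Complex.log_exp (abs_lt.mp hz).1 (abs_lt.mp hz).2.le] at h1
  refine ⟨G 0, ?_⟩
  have hopen : IsOpen {z : ℂ | |z.im| < s0} := isOpen_lt (by fun_prop) continuous_const
  have hconv : Convex ℝ {z : ℂ | |z.im| < s0} := by
    have : {z : ℂ | |z.im| < s0} = Complex.imLm ⁻¹' (Set.Ioo (-s0) s0) := by
      ext z; simp [abs_lt]
    rw [this]
    exact (convex_Ioo _ _).linear_preimage _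
  have hA : AnalyticOnNhd ℂ R {z : ℂ | |z.im| < s0} :=
    DifferentiableOn.analyticOnNhd (fun z hz => (hd z hz).differentiableWithinAt) hopen
  have hB : AnalyticOnNhd ℂ (fun _ : ℂ => G 0) {z : ℂ | |z.im| < s0} := analyticOnNhd_const
  have h0 : (0 : ℂ) ∈ {z : ℂ | |z.im| < s0} := by
    simp; linarith [Real.pi_pos]
  refine fun z hz => hA.eqOn_of_preconnected_of_eventuallyEq hB hconv.isPreconnected h0 ?_ hz
  have : {z : ℂ | |z.im| < π} ∈ 𝓝 (0 : ℂ) :=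
    (isOpen_lt (by fun_prop) continuous_const).mem_nhds (by simp [Real.pi_pos])
  filter_upwards [this] with z hz using hin z hz

/-- Fourier transform of `D_α`. -/
def Ff (b : ℝ) (α x : ℂ) : ℂ :=
  ∫ y : ℝ, Complex.exp (-2 * (π : ℂ) * Complex.I * x * (y : ℂ)) * Dfun b α (y : ℂ)

lemma ker_eq (x : ℂ) (y : ℝ) : Complex.exp (-2 * (π : ℂ) * Complex.I * x * (y : ℂ)) =
    Complex.exp (-2 * Complex.I * (π * x) * ((y : ℂ) + Complex.I * ((0 : ℝ) : ℂ))) := by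
  congr 1; push_cast; ring

lemma pi_mul_im (x : ℂ) : ((π : ℂ) * x).im = π * x.im := Complex.im_ofReal_mul _ _

lemma abs_pi_mul_im (x : ℂ) : |((π : ℂ) * x).im| = π * |x.im| := by
  rw [pi_mul_im, abs_mul, abs_of_pos Real.pi_pos]

lemma Dfun_cont {b : ℝ} (hb : 0 < b) {α : ℂ} (hα : 2 * |α.im| < b + b⁻¹) :
    Continuous (fun y : ℝ => Dfun b α (y : ℂ)) := by
  rw [continuous_iff_continuousAt]
  intro y
  have h1 : ContinuousAt (Dfun b α) (y : ℂ) :=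
    (Dfun_differentiableAt hb (by simpa using hα)).continuousAt
  exact h1.comp (f := fun y : ℝ => (y : ℂ)) Complex.continuous_ofReal.continuousAt

lemma Dfun_decay {b : ℝ} (hb : 0 < b) {α : ℂ} (hα : 2 * |α.im| < b + b⁻¹) :
    ∃ C : ℝ, 0 < C ∧ ∀ y : ℝ, ‖Dfun b α (y : ℂ)‖ ≤ C * Real.exp (-(2 * π * -α.im) * |y|) := by
  obtain ⟨C, hC, h⟩ := Dfun_bound hb α hα
  refine ⟨C, hC, fun y => ?_⟩
  have := h y (by simp)
  rw [Complex.ofReal_re] at this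
  refine this.trans (le_of_eq ?_)
  congr 2; ring

lemma Ff_integrable {b : ℝ} (hb : 0 < b) {α x : ℂ} (hα : 2 * |α.im| < b + b⁻¹) (hx : |x.im| < -α.im) :
    Integrable (fun y : ℝ => Complex.exp (-2 * (π : ℂ) * Complex.I * x * (y : ℂ)) * Dfun b α (y : ℂ)) := by
  obtain ⟨C, -, h⟩ := Dfun_decay hb hα
  simp_rw [ker_eq]
  refine lap_integrable (Dfun_cont hb hα) h ?_
  rw [abs_pi_mul_im]
  nlinarith [Real.pi_pos]

lemma Ff_differentiableAt {b : ℝ} (hb : 0 < b) {α x : ℂ} (hα : 2 * |α.im| < b + b⁻¹) (hx : |x.im| < -α.im) :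
    DifferentiableAt ℂ (Ff b α) x := by
  obtain ⟨C, -, h⟩ := Dfun_decay hb hα
  have h1 := (lap_hasDerivAt (ε := 0) (z := π * x) (Dfun_cont hb hα) h (by
    rw [abs_pi_mul_im]
    nlinarith [Real.pi_pos])).differentiableAt
  have h2 := h1.comp x (differentiableAt_id.const_mul (π : ℂ))
  have e : Ff b α = (fun z : ℂ => ∫ t : ℝ,
        Complex.exp (-2 * Complex.I * z * ((t : ℂ) + Complex.I * ((0 : ℝ) : ℂ))) * Dfun b α (t : ℂ)) ∘ (fun x : ℂ => π * x) := by
    funext x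
    simp only [Function.comp, Ff]
    simp_rw [ker_eq]
  rw [e]
  exact h2

lemma Ff_bound {b : ℝ} (hb : 0 < b) {α : ℂ} (hα : 2 * |α.im| < b + b⁻¹) {s : ℝ} (hs : s < -α.im) :
    ∃ C : ℝ, ∀ x : ℂ, |x.im| ≤ s → ‖Ff b α x‖ ≤ C := by
  obtain ⟨C, -, h⟩ := Dfun_decay hb hα
  obtain ⟨C', h'⟩ := lap_bound (s' := π * s) 0 h (by nlinarith [Real.pi_pos])
  refine ⟨C', fun x hx => ?_⟩
  have := h' (π * x) (by
    rw [abs_pi_mul_im]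
    exact mul_le_mul_of_nonneg_left hx Real.pi_pos.le)
  unfold Ff
  simp_rw [ker_eq]
  simpa using this

lemma Ff_diffeq {b : ℝ} (hb : 0 < b) {α a x : ℂ} (hαa : α = -a - cb b) (hα : 2 * |α.im| < b + b⁻¹) (hbα : b / 2 < -α.im)
    (hx : |x.im| < -α.im - b / 2) :
    Ff b α (x + Complex.I * b / 2) * Complex.cosh (π * b * (x - a)) =
    Ff b α (x - Complex.I * b / 2) * Complex.cosh (π * b * (x + a)) := by
  have hb' : (b : ℂ) ≠ 0 := by exact_mod_cast hb.ne'
  have hbi := inv_pos.mpr hb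
  have hα' := abs_lt.mp (show |α.im| < (b + b⁻¹) / 2 by linarith)
  have hx' := abs_lt.mp hx
  set γ := α + Complex.I * b / 2 with hγ
  have hγi : γ.im = α.im + b / 2 := by rw [hγ]; simp
  have hγabs : |γ.im| = -α.im - b / 2 := by rw [hγi, abs_of_neg (by linarith)]; ring
  obtain ⟨C, hC, hDb⟩ := Dfun_bound hb γ (s := |α.im|) hα
  set δ := 2 * π * (-α.im - b / 2 - |x.im|) with hδ
  have hδ0 : 0 < δ := by have := Real.pi_pos; rw [hδ]; apply mul_pos <;> linarith
  set M := Real.exp (2 * (b / 2) * |((π : ℂ) * x).re|) with hM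
  have habsα : |α.im| = -α.im := abs_of_neg (by linarith)
  have key := shift_contour (f := fun y : ℂ => Complex.exp (-2 * Complex.I * (π * x) * y) * Dfun b γ y)
    (c := -(b / 2)) (d := b / 2) (C := M * C * (2 / δ ^ 2)) (by linarith) (by
      intro y h1 h2
      have hy : |y.im| ≤ b / 2 := abs_le.mpr ⟨h1, h2⟩
      have := Dfun_differentiableAt hb (α := γ) (y := y) (by rw [hγabs]; linarith)
      fun_prop) (by
      intro t u ht h1 h2
      have hu : |u| ≤ b / 2 := abs_le.mpr ⟨h1, h2⟩
      have a1 := norm_ker_strip (π * x) hu t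
      have a2 := hDb ((t : ℂ) + Complex.I * (u : ℂ)) (by rw [hγabs, habsα]; simp; linarith)
      have er : ((t : ℂ) + Complex.I * (u : ℂ)).re = t := by simp
      rw [er] at a2
      rw [norm_mul]
      calc _ ≤ (M * Real.exp (2 * |((π : ℂ) * x).im| * |t|)) * (C * Real.exp (2 * π * |t| * γ.im)) := by
            gcongr
        _ = M * C * (Real.exp (2 * |((π : ℂ) * x).im| * |t|) * Real.exp (2 * π * |t| * γ.im)) := by ring
        _ = M * C * Real.exp (-δ * |t|) := by
            rw [← Real.exp_add, abs_pi_mul_im, hγi, hδ]; ring_nf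
        _ ≤ M * C * ((2 / δ ^ 2) / t ^ 2) := by
            gcongr
            exact exp_neg_le_div_sq hδ0 ht
        _ = _ := by ring)
  have E1 : ∀ t : ℝ, Dfun b γ ((t : ℂ) + Complex.I * ((-(b / 2) : ℝ) : ℂ)) =
      2 * Complex.cosh (π * b * (t - γ)) * Dfun b α t := by
    intro t
    have h := wb_shift hb (z := t - γ) (by
      have : |((t : ℂ) - γ).im| < b⁻¹ / 2 := by
        rw [Complex.sub_im, Complex.ofReal_im, zero_sub, abs_neg, hγabs]; linarith
      linarith)
    have e1 : (t : ℂ) - γ + Complex.I * b / 2 = t - α := by rw [hγ]; ring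
    have e2 : (t : ℂ) + Complex.I * ((-(b / 2) : ℝ) : ℂ) - γ = t - γ - Complex.I * b / 2 := by push_cast; ring
    have e3 : (t : ℂ) + Complex.I * ((-(b / 2) : ℝ) : ℂ) + γ = t + α := by rw [hγ]; push_cast; ring
    rw [e1] at h
    unfold Dfun
    rw [e2, e3]
    have n1 := wb_ne_zero hb ((t : ℂ) - γ - Complex.I * b / 2)
    have n2 := wb_ne_zero hb ((t : ℂ) - α)
    rw [mul_div_assoc', div_eq_div_iff n1 n2, h]
    ring
  have E2 : ∀ t : ℝ, Dfun b γ ((t : ℂ) + Complex.I * ((b / 2 : ℝ) : ℂ)) =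
      2 * Complex.cosh (π * b * (t + γ)) * Dfun b α t := by
    intro t
    have h := wb_shift hb (z := t + γ) (by
      have : |((t : ℂ) + γ).im| < b⁻¹ / 2 := by
        rw [Complex.add_im, Complex.ofReal_im, zero_add, hγabs]; linarith
      linarith)
    have e1 : (t : ℂ) + γ - Complex.I * b / 2 = t + α := by rw [hγ]; ring
    have e2 : (t : ℂ) + Complex.I * ((b / 2 : ℝ) : ℂ) + γ = t + γ + Complex.I * b / 2 := by push_cast; ring
    have e3 : (t : ℂ) + Complex.I * ((b / 2 : ℝ) : ℂ) - γ = t - α := by rw [hγ]; push_cast; ring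
    rw [e1] at h
    unfold Dfun
    rw [e2, e3, h]
    ring
  set p : ℂ := π * b * γ with hp
  set X : ℂ := π * b * x with hX
  have ip : Integrable (fun y : ℝ => Complex.exp (-2 * (π : ℂ) * Complex.I * (x + Complex.I * b / 2) * (y : ℂ)) * Dfun b α (y : ℂ)) := by
    refine Ff_integrable hb hα ?_
    have : (x + Complex.I * b / 2).im = x.im + b / 2 := by simp
    rw [this, abs_lt]; constructor <;> linarith
  have im : Integrable (fun y : ℝ => Complex.exp (-2 * (π : ℂ) * Complex.I * (x - Complex.I * b / 2) * (y : ℂ)) * Dfun b α (y : ℂ)) := by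
    refine Ff_integrable hb hα ?_
    have : (x - Complex.I * b / 2).im = x.im - b / 2 := by simp
    rw [this, abs_lt]; constructor <;> linarith
  have kp : ∀ t : ℝ, Complex.exp (-2 * (π : ℂ) * Complex.I * (x + Complex.I * b / 2) * (t : ℂ)) =
      Complex.exp (-2 * (π : ℂ) * Complex.I * x * t) * Complex.exp (π * b * t) := by
    intro t
    rw [← Complex.exp_add]; congr 1
    linear_combination (-π * b * t) * Complex.I_sq
  have km : ∀ t : ℝ, Complex.exp (-2 * (π : ℂ) * Complex.I * (x - Complex.I * b / 2) * (t : ℂ)) =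
      Complex.exp (-2 * (π : ℂ) * Complex.I * x * t) * Complex.exp (-(π * b * t)) := by
    intro t
    rw [← Complex.exp_add]; congr 1
    linear_combination (π * b * t) * Complex.I_sq
  have cosh_def : ∀ u : ℂ, 2 * Complex.cosh u = Complex.exp u + Complex.exp (-u) := by
    intro u
    have : Complex.cosh u = (Complex.exp u + Complex.exp (-u)) / 2 := rfl
    rw [this]; ring
  have L1 : ∫ t : ℝ, Complex.exp (-2 * Complex.I * (π * x) * ((t : ℂ) + Complex.I * ((-(b / 2) : ℝ) : ℂ))) *
      Dfun b γ ((t : ℂ) + Complex.I * ((-(b / 2) : ℝ) : ℂ)) =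
      Complex.exp (-X - p) * Ff b α (x + Complex.I * b / 2) + Complex.exp (-X + p) * Ff b α (x - Complex.I * b / 2) := by
    unfold Ff
    rw [← integral_const_mul, ← integral_const_mul, ← integral_add (ip.const_mul _) (im.const_mul _)]
    congr 1; ext t
    rw [E1, kp, km, cosh_def]
    have e1 : -2 * Complex.I * (π * x) * ((t : ℂ) + Complex.I * ((-(b / 2) : ℝ) : ℂ)) =
      -2 * (π : ℂ) * Complex.I * x * t + -X := by
      rw [hX]; push_cast; linear_combination (π * x * b) * Complex.I_sq
    have e2 : (π : ℂ) * b * (t - γ) = π * b * t + -p := by rw [hp]; ring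
    have e3 : -((π : ℂ) * b * t + -p) = -(π * b * t) + p := by ring
    have e4 : -X - p = -X + -p := by ring
    rw [e1, e2, e3, e4]
    simp only [Complex.exp_add]
    ring
  have L2 : ∫ t : ℝ, Complex.exp (-2 * Complex.I * (π * x) * ((t : ℂ) + Complex.I * ((b / 2 : ℝ) : ℂ))) *
      Dfun b γ ((t : ℂ) + Complex.I * ((b / 2 : ℝ) : ℂ)) =
      Complex.exp (X + p) * Ff b α (x + Complex.I * b / 2) + Complex.exp (X + -p) * Ff b α (x - Complex.I * b / 2) := by
    unfold Ff
    rw [← integral_const_mul, ← integral_const_mul, ← integral_add (ip.const_mul _) (im.const_mul _)]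
    congr 1; ext t
    rw [E2, kp, km, cosh_def]
    have e1 : -2 * Complex.I * (π * x) * ((t : ℂ) + Complex.I * ((b / 2 : ℝ) : ℂ)) =
      -2 * (π : ℂ) * Complex.I * x * t + X := by
      rw [hX]; push_cast; linear_combination (-π * x * b) * Complex.I_sq
    have e2 : (π : ℂ) * b * (t + γ) = π * b * t + p := by rw [hp]; ring
    have e3 : -((π : ℂ) * b * t + p) = -(π * b * t) + -p := by ring
    rw [e1, e2, e3]
    simp only [Complex.exp_add]
    ring
  rw [L1, L2] at key
  have hγ2 : γ = -a - Complex.I * (b : ℂ)⁻¹ / 2 := by rw [hγ, hαa]; unfold cb; ring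
  have hp2 : p = -(π * b * a) - π / 2 * Complex.I := by
    rw [hp, hγ2]; field_simp
  have f1 : X + p = π * b * (x - a) + -(π / 2 * Complex.I) := by rw [hX, hp2]; ring
  have f2 : -X - p = -(π * b * (x - a)) + (π / 2 * Complex.I) := by rw [hX, hp2]; ring
  have f3 : X + -p = π * b * (x + a) + (π / 2 * Complex.I) := by rw [hX, hp2]; ring
  have f4 : -X + p = -(π * b * (x + a)) + -(π / 2 * Complex.I) := by rw [hX, hp2]; ring
  rw [f1, f2, f3, f4] at key
  have c1 := cosh_def (π * b * (x - a))
  have c2 := cosh_def (π * b * (x + a))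
  have g1 : Complex.exp (π / 2 * Complex.I) = Complex.I := Complex.exp_pi_div_two_mul_I
  have g2 : Complex.exp (-(π / 2 * Complex.I)) = -Complex.I := by
    rw [Complex.exp_neg, g1, Complex.inv_I]
  simp only [Complex.exp_add, g1, g2] at key
  have hI : Complex.I ≠ 0 := Complex.I_ne_zero
  apply mul_left_cancel₀ (mul_ne_zero two_ne_zero hI)
  linear_combination key + (Ff b α (x + Complex.I * b / 2) * Complex.I) * c1 - (Ff b α (x - Complex.I * b / 2) * Complex.I) * c2

lemma Ff_pole {b : ℝ} (hb : 0 < b) {α : ℂ} (hα : 2 * |α.im| < b + b⁻¹) (hα0 : α.im < 0) :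
    Tendsto (fun η : ℝ => (η : ℂ) * Ff b α (-α - Complex.I * η)) (𝓝[>] 0) (𝓝 (1 / (2 * (π : ℂ)))) := by
  have hpi := Real.pi_pos
  obtain ⟨C1, hC1, h1⟩ := Dfun_asymp hb α hα
  obtain ⟨C2, hC2, h2⟩ := Dfun_decay hb hα
  have he := epb_pos hb
  set σ := -α.im with hσ
  have hσ0 : 0 < σ := by rw [hσ]; linarith
  set m := min (2 * epb b) (4 * π * σ) with hm
  have hm0 : 0 < m := lt_min (by linarith) (by positivity)
  set C := max C1 C2 with hC
  have hCp : 0 < C := lt_max_of_lt_left hC1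
  set h : ℝ → ℂ := fun y => Complex.exp (2 * π * Complex.I * α * y) * Dfun b α y with hh
  set ind : ℝ → ℂ := Set.indicator (Set.Ioi 0) (fun _ => (1 : ℂ)) with hind
  have hnb : ∀ y : ℝ, ‖h y - ind y‖ ≤ C * Real.exp (-m * |y|) := by
    intro y
    rcases lt_or_ge 0 y with hy | hy
    · have e : ind y = 1 := Set.indicator_of_mem (show y ∈ Set.Ioi (0:ℝ) from hy) _
      have := h1 y hy.le
      rw [e]
      simp only [hh]
      rw [mul_comm (Complex.exp _), abs_of_pos hy]
      refine this.trans ?_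
      have : m ≤ 2 * epb b := min_le_left _ _
      refine mul_le_mul (le_max_left _ _) (Real.exp_le_exp.mpr ?_) (Real.exp_pos _).le hCp.le
      nlinarith
    · have e : ind y = 0 := Set.indicator_of_notMem (by simpa using hy) _
      rw [e, sub_zero]
      simp only [hh]
      rw [norm_mul, Complex.norm_exp]
      have e2 : (2 * π * Complex.I * α * y : ℂ).re = 2 * π * σ * y := by
        have : (2 * π * Complex.I * α * y : ℂ) = ((2 * π * y : ℝ) : ℂ) * (Complex.I * α) := by push_cast; ring
        rw [this, Complex.re_ofReal_mul, hσ]; simp; ring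
      rw [e2]
      have h3 := h2 y
      rw [abs_of_nonpos hy] at h3 ⊢
      calc _ ≤ Real.exp (2 * π * σ * y) * (C2 * Real.exp (-(2 * π * σ) * -y)) := by gcongr
        _ = C2 * Real.exp (-(4 * π * σ) * -y) := by
            rw [mul_left_comm, ← Real.exp_add]; ring_nf
        _ ≤ _ := by
            have : m ≤ 4 * π * σ := min_le_right _ _
            refine mul_le_mul (le_max_right _ _) (Real.exp_le_exp.mpr ?_) (Real.exp_pos _).le hCp.le
            nlinarith
  set M := ∫ y : ℝ, C * Real.exp (-(m / 2) * |y|) with hM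
  have hMi : Integrable (fun y : ℝ => C * Real.exp (-(m / 2) * |y|)) :=
    (integrable_exp_neg_abs' (by linarith)).const_mul C
  have hsmall : ∀ᶠ η : ℝ in 𝓝[>] 0, ‖(η : ℂ) * Ff b α (-α - Complex.I * η) - 1 / (2 * π)‖ ≤ η * M := by
    have hpos : 0 < min σ (m / (4 * π)) := lt_min hσ0 (by positivity)
    filter_upwards [Ioo_mem_nhdsGT hpos] with η hη
    have hη0 : 0 < η := hη.1
    have hησ : η < σ := lt_of_lt_of_le hη.2 (min_le_left _ _)
    have hηm : η < m / (4 * π) := lt_of_lt_of_le hη.2 (min_le_right _ _)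
    have hηm' : 2 * π * η ≤ m / 2 := by
      rw [lt_div_iff₀ (by positivity)] at hηm; linarith
    have i1 := Ff_integrable hb (x := -α - Complex.I * η) hα (by
      have : (-α - Complex.I * η).im = σ - η := by rw [hσ]; simp
      rw [this, abs_lt]; constructor <;> linarith)
    have re0 : (-(2 * π * η : ℂ)).re < 0 := by
      have : (-(2 * π * η : ℂ)) = ((-(2 * π * η) : ℝ) : ℂ) := by push_cast; ring
      rw [this, Complex.ofReal_re]
      have : 0 < 2 * π * η := by positivity
      linarith
    have i2 : Integrable (Set.indicator (Set.Ioi (0:ℝ)) (fun y : ℝ => Complex.exp (-(2 * π * η : ℂ) * y))) :=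
      (integrable_indicator_iff measurableSet_Ioi).mpr (integrableOn_exp_mul_complex_Ioi re0 0)
    have v2 : ∫ y : ℝ, Set.indicator (Set.Ioi (0:ℝ)) (fun y : ℝ => Complex.exp (-(2 * π * η : ℂ) * y)) y = 1 / (2 * π * η) := by
      rw [integral_indicator measurableSet_Ioi, integral_exp_mul_complex_Ioi re0]
      simp
    have hη' : (η : ℂ) ≠ 0 := by exact_mod_cast hη0.ne'
    have hpi' : (π : ℂ) ≠ 0 := by exact_mod_cast hpi.ne'
    have e : (η : ℂ) * Ff b α (-α - Complex.I * η) - 1 / (2 * π) =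
        η * (Ff b α (-α - Complex.I * η) - 1 / (2 * π * η)) := by
      field_simp
    rw [e, norm_mul, Complex.norm_real, Real.norm_of_nonneg hη0.le]
    refine mul_le_mul_of_nonneg_left ?_ hη0.le
    rw [← v2]
    unfold Ff
    rw [← integral_sub i1 i2]
    refine norm_integral_le_of_norm_le hMi (ae_of_all _ fun y => ?_)
    have e3 : Complex.exp (-2 * (π : ℂ) * Complex.I * (-α - Complex.I * η) * (y : ℂ)) * Dfun b α (y : ℂ) -
        Set.indicator (Set.Ioi (0:ℝ)) (fun y : ℝ => Complex.exp (-(2 * π * η : ℂ) * y)) y =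
        Complex.exp (-(2 * π * η : ℂ) * y) * (h y - ind y) := by
      have e4 : Complex.exp (-2 * (π : ℂ) * Complex.I * (-α - Complex.I * η) * (y : ℂ)) =
          Complex.exp (-(2 * π * η : ℂ) * y) * Complex.exp (2 * π * Complex.I * α * y) := by
        rw [← Complex.exp_add]; congr 1
        linear_combination (2 * π * η * y) * Complex.I_sq
      rw [e4, mul_sub]
      congr 1
      · simp only [hh]; ring
      · simp only [hind, Set.indicator_apply]
        split_ifs <;> simp
    rw [e3, norm_mul]
    have e5 : ‖Complex.exp (-(2 * π * η : ℂ) * y)‖ ≤ Real.exp (m / 2 * |y|) := by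
      rw [Complex.norm_exp]
      have : (-(2 * π * η : ℂ) * y) = ((-(2 * π * η) * y : ℝ) : ℂ) := by push_cast; ring
      rw [this, Complex.ofReal_re, Real.exp_le_exp]
      have h5 : 0 ≤ 2 * π * η := by positivity
      calc -(2 * π * η) * y ≤ 2 * π * η * |y| := by nlinarith [neg_abs_le y]
        _ ≤ _ := by gcongr
    calc _ ≤ Real.exp (m / 2 * |y|) * (C * Real.exp (-m * |y|)) := by
          gcongr
          exact hnb y
      _ = C * (Real.exp (m / 2 * |y|) * Real.exp (-m * |y|)) := by ring
      _ = _ := by rw [← Real.exp_add]; ring_nf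
  rw [tendsto_iff_norm_sub_tendsto_zero]
  have hz : Tendsto (fun η : ℝ => η * M) (𝓝[>] 0) (𝓝 0) := by
    have : Tendsto (fun η : ℝ => η * M) (𝓝 0) (𝓝 (0 * M)) := by apply Continuous.tendsto; fun_prop
    rw [zero_mul] at this
    exact this.mono_left nhdsWithin_le_nhds
  exact squeeze_zero' (Eventually.of_forall fun _ => norm_nonneg _) hsmall hz

lemma Dfun_diffeq {b : ℝ} (hb : 0 < b) {a x : ℂ} (h : 2 * (|x.im| + |a.im|) < b⁻¹) :
    Dfun b a (x + Complex.I * b / 2) * Complex.cosh (π * b * (x - a)) =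
      Dfun b a (x - Complex.I * b / 2) * Complex.cosh (π * b * (x + a)) ∧
    Complex.cosh (π * b * (x - a)) ≠ 0 ∧ Complex.cosh (π * b * (x + a)) ≠ 0 := by
  have h1 := wb_shift hb (z := x + a) (by
    have := abs_add_le x.im a.im
    rw [Complex.add_im]; linarith)
  have h2 := wb_shift hb (z := x - a) (by
    have := abs_sub x.im a.im
    rw [Complex.sub_im]; linarith)
  have n1 := wb_ne_zero hb (x + a + Complex.I * b / 2)
  have n2 := wb_ne_zero hb (x - a + Complex.I * b / 2)
  have n3 := wb_ne_zero hb (x - a - Complex.I * b / 2)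
  refine ⟨?_, ?_, ?_⟩
  · unfold Dfun
    have e1 : x + Complex.I * b / 2 + a = x + a + Complex.I * b / 2 := by ring
    have e2 : x + Complex.I * b / 2 - a = x - a + Complex.I * b / 2 := by ring
    have e3 : x - Complex.I * b / 2 + a = x + a - Complex.I * b / 2 := by ring
    have e4 : x - Complex.I * b / 2 - a = x - a - Complex.I * b / 2 := by ring
    rw [e1, e2, e3, e4, div_mul_eq_mul_div, div_mul_eq_mul_div, div_eq_div_iff n2 n3, h1, h2]
    ring
  · intro h0; rw [h2, h0] at n2; simp at n2
  · intro h0; rw [h1, h0] at n1; simp at n1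

lemma main_le {b : ℝ} (hb : 0 < b) (hb1 : b ≤ b⁻¹) (a : ℂ)
    (ha₁ : -((b + b⁻¹) / 4) < a.im) (ha₂ : a.im < 0) (x : ℝ) :
    Integrable (fun y : ℝ =>
      Complex.exp (-2 * (π : ℂ) * Complex.I * (x : ℂ) * (y : ℂ)) *
        Dfun b (-a - cb b) (y : ℂ)) ∧
    Dfun b a (x : ℂ) = wb b (2 * a + cb b) * Ff b (-a - cb b) x := by
  have hpi := Real.pi_pos
  have hbi := inv_pos.mpr hb
  have hb' : (b : ℂ) ≠ 0 := by exact_mod_cast hb.ne'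
  have hpi' : (π : ℂ) ≠ 0 := by exact_mod_cast hpi.ne'
  set α := -a - cb b with hα
  have hcbi : (cb b).im = (b + b⁻¹) / 2 := by
    have : cb b = (((b + b⁻¹) / 2 : ℝ) : ℂ) * Complex.I := by unfold cb; push_cast; ring
    rw [this, Complex.im_ofReal_mul]; simp
  have hαi : α.im = -a.im - (b + b⁻¹) / 2 := by rw [hα, Complex.sub_im, Complex.neg_im, hcbi]
  have hα0 : α.im < 0 := by linarith
  have hαabs : |α.im| = -α.im := abs_of_neg hα0
  have hα2 : 2 * |α.im| < b + b⁻¹ := by rw [hαabs]; linarith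
  have hbα : b / 2 < -α.im := by linarith
  have haabs : |a.im| = -a.im := abs_of_neg ha₂
  set σ := -α.im with hσ
  have hσ0 : 0 < σ := by linarith
  refine ⟨Ff_integrable hb hα2 (by rw [Complex.ofReal_im, abs_zero]; exact hσ0), ?_⟩
  have hDd : ∀ z : ℂ, |z.im| < σ → DifferentiableAt ℂ (Dfun b a) z := fun z hz =>
    Dfun_differentiableAt hb (by rw [haabs]; linarith)
  obtain ⟨K, hK⟩ := (by
    obtain ⟨C1, hC1⟩ := Ff_bound hb hα2 hbα
    obtain ⟨C2, hC2, hDb⟩ := Dfun_bound hb (-a) (s := b / 2 + -a.im) (by linarith)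
    have him : ∀ z : ℂ, ((b / (2 * π) : ℝ) * z : ℂ).im = b / (2 * π) * z.im := fun z => Complex.im_ofReal_mul _ _
    have hre : ∀ z : ℂ, ((b / (2 * π) : ℝ) * z : ℂ).re = b / (2 * π) * z.re := fun z => Complex.re_ofReal_mul _ _
    have hq : 0 < b / (2 * π) := by positivity
    have habs : ∀ z : ℂ, |((b / (2 * π) : ℝ) * z : ℂ).im| = b / (2 * π) * |z.im| := fun z => by
      rw [him, abs_mul, abs_of_pos hq]
    have hlt : ∀ z : ℂ, |z.im| < 2 * π * σ / b → |((b / (2 * π) : ℝ) * z : ℂ).im| < σ := fun z hz => by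
      rw [habs]
      calc _ < b / (2 * π) * (2 * π * σ / b) := by gcongr
        _ = σ := by field_simp
    exact strip_const (R := fun z => Ff b α ((b / (2 * π) : ℝ) * z) / Dfun b a ((b / (2 * π) : ℝ) * z))
      (s0 := 2 * π * σ / b) (C := max C1 0 * C2) (c := b * -a.im)
      (by rw [lt_div_iff₀ hb]; nlinarith)
      (by
        have : b * b⁻¹ = 1 := mul_inv_cancel₀ hb.ne'
        nlinarith)
      (by
        intro z hz
        have h1 := Ff_differentiableAt hb hα2 (hlt z hz)
        have h2 := hDd _ (hlt z hz)
        have h3 : DifferentiableAt ℂ (fun z : ℂ => ((b / (2 * π) : ℝ) : ℂ) * z) z := by fun_prop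
        exact (h1.comp z h3).div (h2.comp z h3) (Dfun_ne_zero hb _ _))
      (by
        intro z hz
        have hzi : |((b / (2 * π) : ℝ) * z : ℂ).im| < σ - b / 2 := by
          rw [habs]
          calc _ < b / (2 * π) * (2 * π * σ / b - π) := by gcongr
            _ = _ := by field_simp
        have e1 : ((b / (2 * π) : ℝ) : ℂ) * (z + π * Complex.I) = (b / (2 * π) : ℝ) * z + Complex.I * b / 2 := by
          push_cast; field_simp
        have e2 : ((b / (2 * π) : ℝ) : ℂ) * (z - π * Complex.I) = (b / (2 * π) : ℝ) * z - Complex.I * b / 2 := by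
          push_cast; field_simp
        rw [e1, e2]
        have h1 := Ff_diffeq hb hα hα2 hbα hzi
        obtain ⟨h2, n1, n2⟩ := Dfun_diffeq hb (a := a) (x := (b / (2 * π) : ℝ) * z) (by rw [haabs]; linarith)
        have m1 := Dfun_ne_zero hb a ((b / (2 * π) : ℝ) * z + Complex.I * b / 2)
        have m2 := Dfun_ne_zero hb a ((b / (2 * π) : ℝ) * z - Complex.I * b / 2)
        generalize Ff b α ((b / (2 * π) : ℝ) * z + Complex.I * b / 2) = F1 at *
        generalize Ff b α ((b / (2 * π) : ℝ) * z - Complex.I * b / 2) = F2 at *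
        generalize Dfun b a ((b / (2 * π) : ℝ) * z + Complex.I * b / 2) = D1 at *
        generalize Dfun b a ((b / (2 * π) : ℝ) * z - Complex.I * b / 2) = D2 at *
        generalize Complex.cosh (π * b * ((b / (2 * π) : ℝ) * z - a)) = c1 at *
        generalize Complex.cosh (π * b * ((b / (2 * π) : ℝ) * z + a)) = c2 at *
        rw [div_eq_div_iff m1 m2]
        apply mul_left_cancel₀ (mul_ne_zero n1 n2)
        linear_combination (D2 * c2) * h1 - (F2 * c2) * h2)
      (by
        intro z hz
        have hzi : |((b / (2 * π) : ℝ) * z : ℂ).im| ≤ b / 2 := by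
          rw [habs]
          calc _ ≤ b / (2 * π) * π := by gcongr
            _ = _ := by field_simp
        have h1 := (hC1 _ hzi).trans (le_max_left C1 0)
        have h2 := hDb ((b / (2 * π) : ℝ) * z) (by
          rw [Complex.neg_im, abs_neg, haabs]; linarith)
        have e1 : Dfun b (-a) ((b / (2 * π) : ℝ) * z) = (Dfun b a ((b / (2 * π) : ℝ) * z))⁻¹ := by
          unfold Dfun; rw [inv_div, sub_neg_eq_add, ← sub_eq_add_neg]
        rw [e1, hre, abs_mul, abs_of_pos hq, Complex.neg_im] at h2
        rw [div_eq_mul_inv, norm_mul]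
        calc _ ≤ max C1 0 * (C2 * Real.exp (2 * π * (b / (2 * π) * |z.re|) * -a.im)) := by
              gcongr
          _ = max C1 0 * C2 * Real.exp (2 * π * (b / (2 * π) * |z.re|) * -a.im) := by ring
          _ = _ := by
              congr 2
              field_simp) : ∃ K : ℂ, ∀ z : ℂ, |z.im| < 2 * π * σ / b →
      Ff b α ((b / (2 * π) : ℝ) * z) / Dfun b a ((b / (2 * π) : ℝ) * z) = K)
  have hF : ∀ z : ℂ, |z.im| < σ → Ff b α z = K * Dfun b a z := by
    intro z hz
    have h1 := hK (((2 * π / b : ℝ) : ℂ) * z) (by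
      rw [Complex.im_ofReal_mul, abs_mul, abs_of_pos (by positivity)]
      calc _ < 2 * π / b * σ := by gcongr
        _ = _ := by ring)
    have e : ((b / (2 * π) : ℝ) : ℂ) * (((2 * π / b : ℝ) : ℂ) * z) = z := by
      push_cast; field_simp
    rw [e] at h1
    rw [← h1, div_mul_cancel₀ _ (Dfun_ne_zero hb _ _)]
  have l1 := Ff_pole hb hα2 hα0
  have l2 : Tendsto (fun η : ℝ => (η : ℂ) * Dfun b a (-α - Complex.I * η)) (𝓝[>] 0)
      (𝓝 ((2 * (π : ℂ))⁻¹ * wb b (2 * a + cb b))) := by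
    have t1 := (wb_cb_limit hb).inv₀ (by simp [hpi'])
    have hc : Tendsto (fun η : ℝ => wb b (2 * a + cb b - Complex.I * η)) (𝓝[>] 0) (𝓝 (wb b (2 * a + cb b))) := by
      have h1 : ContinuousAt (wb b) (2 * a + cb b) := by
        refine (wb_differentiableAt hb ?_).continuousAt
        have e : (2 * a + cb b).im = 2 * a.im + (b + b⁻¹) / 2 := by
          rw [Complex.add_im, hcbi]; simp
        rw [e, abs_of_pos (by linarith)]
        linarith
      have h2 : Tendsto (fun η : ℝ => 2 * a + cb b - Complex.I * η) (𝓝 0) (𝓝 (2 * a + cb b - Complex.I * (0:ℝ))) := by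
        apply Continuous.tendsto; fun_prop
      rw [Complex.ofReal_zero, mul_zero, sub_zero] at h2
      exact h1.tendsto.comp (h2.mono_left nhdsWithin_le_nhds)
    refine (t1.mul hc).congr fun η => ?_
    unfold Dfun
    have e1 : -α - Complex.I * η + a = 2 * a + cb b - Complex.I * η := by rw [hα]; ring
    have e2 : -α - Complex.I * η - a = cb b - Complex.I * η := by rw [hα]; ring
    rw [e1, e2, inv_div]
    ring
  have l3 := l2.const_mul K
  have l4 : Tendsto (fun η : ℝ => (η : ℂ) * Ff b α (-α - Complex.I * η)) (𝓝[>] 0)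
      (𝓝 (K * ((2 * (π : ℂ))⁻¹ * wb b (2 * a + cb b)))) := by
    refine l3.congr' ?_
    filter_upwards [Ioo_mem_nhdsGT hσ0] with η hη
    rw [hF _ (by
      have : (-α - Complex.I * η).im = σ - η := by rw [hσ]; simp
      rw [this, abs_lt]; constructor <;> linarith [hη.1, hη.2])]
    ring
  have l5 := tendsto_nhds_unique l1 l4
  have l6 : K * wb b (2 * a + cb b) = 1 := by
    field_simp at l5
    exact l5.symm
  rw [hF x (by rw [Complex.ofReal_im, abs_zero]; exact hσ0)]
  linear_combination (-Dfun b a x) * l6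

theorem statement10_aux (b : ℝ) (hb : 0 < b) (x : ℝ) (a : ℂ)
    (ha₁ : -((b + b⁻¹) / 4) < a.im) (ha₂ : a.im < 0) :
    Integrable (fun y : ℝ =>
      Complex.exp (-2 * (π : ℂ) * Complex.I * (x : ℂ) * (y : ℂ)) *
        Dfun b (-a - cb b) (y : ℂ)) ∧
    Dfun b a (x : ℂ) =
      wb b (2 * a + cb b) *
        ∫ y : ℝ, Complex.exp (-2 * (π : ℂ) * Complex.I * (x : ℂ) * (y : ℂ)) *
          Dfun b (-a - cb b) (y : ℂ) := by
  rcases le_total b b⁻¹ with h | h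
  · exact main_le hb h a ha₁ ha₂ x
  · have := main_le (inv_pos.mpr hb) (by rwa [inv_inv]) a (by rw [inv_inv]; linarith) ha₂ x
    unfold Ff at this
    rw [cb_inv, Dfun_inv, wb_inv] at this
    exact this

/-- the Fourier transform formula
`D_a(x) = w_b(2a+c_b)·∫ e^{−2πixy}·D_{−a−c_b}(y) dy` for real `x`
and `−(b+b⁻¹)/4 < Im a < 0`, the integral being absolutely convergent. -/
theorem statement10 (b : ℝ) (hb : 0 < b) (x : ℝ) (a : ℂ)
    (ha₁ : -((b + b⁻¹) / 4) < a.im) (ha₂ : a.im < 0) :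
    Integrable (fun y : ℝ =>
      Complex.exp (-2 * (π : ℂ) * Complex.I * (x : ℂ) * (y : ℂ)) *
        Dfun b (-a - cb b) (y : ℂ)) ∧
    Dfun b a (x : ℂ) =
      wb b (2 * a + cb b) *
        ∫ y : ℝ, Complex.exp (-2 * (π : ℂ) * Complex.I * (x : ℂ) * (y : ℂ)) *
          Dfun b (-a - cb b) (y : ℂ) := by
  exact statement10_aux b hb x a ha₁ ha₂

end
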